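/- arXiv:2310.14517 — 2 statements merged into one kernel-verified Lean document; each statement's English description precedes it below -/
import Mathlib

section
/- Let d ≥ 5, T > 0, and let v, f : ℝ × ℝ^d → ℝ be smooth functions such that there is R > 0 with supp v(t, ·) ∪ supp f(t, ·) ⊆ {x : |x| ≤ R} for every t ∈ [0, T]. Suppose v solves the perturbed Hartree nonlinear wave equation ∂²_t v = Δv − 𝒩(v + f) on [0, T] × ℝ^d with v(0, ·) = 0 and ∂_t v(0, ·) = 0, where 𝒩(w)(x) = ( ∫_{ℝ^d} |x − y|^{-4} w(y)² dy ) w(x). Then for every t ∈ [0, T], E(v(t, ·), ∂_t v(t, ·)) = − ∫₀^t ∫_{ℝ^d} ∂_{t'} v(t', x) [ 𝒩(v + f)(t', x) − 𝒩(v)(t', x) ] dx dt'. -/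
/-!
Multiplying `∂ₜ²v - Δv = -F` by `∂ₜv` and integrating over `[a, b] × ℝ^d` gives
`E(b) - E(a) = -∫∫ ∂ₜv (F - 𝒩(v))`: the quadratic part of the energy is handled by Green's identity,
and the quartic part by the symmetry of `|x - y|^{-4}`, which is integrable on compact subsets of
`ℝ^d × ℝ^d` because `4 < d`. The theorem is the case `F = 𝒩(v + f)` with zero initial energy.

Both parts of the energy have the form `∫ G(t, z) k(z) dz` with `G` of class `C¹` and supported in a
fixed compact set on which `k` is integrable. Fubini and the fundamental theorem of calculus in `t`,
for each `z`, give `∫ G(b, z) k(z) dz - ∫ G(a, z) k(z) dz = ∫ₐᵇ ∫ ∂ₜG(t, z) k(z) dz dt`, so the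
energy is never differentiated under the integral sign and the support of `v(t, ·)` matters only for
`t ∈ [a, b]`.
-/

open MeasureTheory

/-- The energy of the Hartree nonlinear wave equation:
`E(u₀,u₁) = ½ ∫ (u₁² + |∇u₀|²) + ¼ ∬ u₀(x)² u₀(y)² |x-y|^{-4}`. -/
noncomputable def hartreeEnergy (d : ℕ) (u₀ u₁ : EuclideanSpace ℝ (Fin d) → ℝ) : ℝ :=
  (1 / 2) * (∫ x, ((u₁ x) ^ 2 + ‖fderiv ℝ u₀ x‖ ^ 2)) +
    (1 / 4) * ∫ x, ∫ y, (u₀ x) ^ 2 * (u₀ y) ^ 2 * ‖x - y‖ ^ (-4 : ℝ)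

/-- The Euclidean Laplacian as the sum of second partial derivatives along the
standard coordinate directions. -/
noncomputable def euclidLaplacian (d : ℕ) (f : EuclideanSpace ℝ (Fin d) → ℝ)
    (x : EuclideanSpace ℝ (Fin d)) : ℝ :=
  ∑ i : Fin d,
    fderiv ℝ (fun y => fderiv ℝ f y (EuclideanSpace.single i 1)) x (EuclideanSpace.single i 1)

/-- The Hartree nonlinearity `𝒩(w)(x) = (∫ |x-y|^{-4} w(y)² dy) w(x)`. -/
noncomputable def hartreeNonlinearity (d : ℕ) (w : EuclideanSpace ℝ (Fin d) → ℝ)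
    (x : EuclideanSpace ℝ (Fin d)) : ℝ :=
  (∫ y, ‖x - y‖ ^ (-4 : ℝ) * (w y) ^ 2) * w x

open Set Function

/-! ### Partial derivatives of functions on spacetime -/

section Spacetime

variable {E : Type*} [NormedAddCommGroup E] [NormedSpace ℝ E] {u : ℝ → E → ℝ}

/-- The partial derivative `∂ₜu` of a function on spacetime, again as a curried function. -/
noncomputable def timeDeriv (u : ℝ → E → ℝ) (t : ℝ) (x : E) : ℝ :=
  deriv (fun s => u s x) t

/-- The partial derivative `∂ₑu` of a function on spacetime in the spatial direction `e`. -/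
noncomputable def spaceDeriv (e : E) (u : ℝ → E → ℝ) (t : ℝ) (x : E) : ℝ :=
  fderiv ℝ (u t) x e

lemma contDiff_fderiv_apply {g : E → ℝ} {m n : WithTop ℕ∞} (hg : ContDiff ℝ n g) (hmn : m + 1 ≤ n)
    (e : E) : ContDiff ℝ m fun x => fderiv ℝ g x e :=
  (hg.fderiv_right hmn).clm_apply contDiff_const

lemma hasDerivAt_fderiv_uncurry (hu : Differentiable ℝ (uncurry u)) (t : ℝ) (x : E) :
    HasDerivAt (fun s => u s x) (fderiv ℝ (uncurry u) (t, x) (1, 0)) t :=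
  (hu (t, x)).hasFDerivAt.comp_hasDerivAt_of_eq t
    ((hasDerivAt_id t).prodMk (hasDerivAt_const t x)) rfl

lemma hasDerivAt_timeDeriv (hu : Differentiable ℝ (uncurry u)) (t : ℝ) (x : E) :
    HasDerivAt (fun s => u s x) (timeDeriv u t x) t :=
  (hasDerivAt_fderiv_uncurry hu t x).differentiableAt.hasDerivAt

lemma uncurry_timeDeriv (hu : Differentiable ℝ (uncurry u)) :
    uncurry (timeDeriv u) = fun p => fderiv ℝ (uncurry u) p (1, 0) :=
  funext fun p => (hasDerivAt_fderiv_uncurry hu p.1 p.2).deriv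

lemma uncurry_spaceDeriv (hu : Differentiable ℝ (uncurry u)) (e : E) :
    uncurry (spaceDeriv e u) = fun p => fderiv ℝ (uncurry u) p (0, e) := by
  funext ⟨t, x⟩
  have h : HasFDerivAt (u t) _ x := (hu (t, x)).hasFDerivAt.comp x (hasFDerivAt_prodMk_right t x)
  simp [spaceDeriv, h.fderiv]

lemma contDiff_timeDeriv {m n : WithTop ℕ∞} (hu : ContDiff ℝ n (uncurry u)) (hmn : m + 1 ≤ n) :
    ContDiff ℝ m (uncurry (timeDeriv u)) := by
  rw [uncurry_timeDeriv ((hu.of_le (le_add_self.trans hmn)).differentiable one_ne_zero)]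
  exact contDiff_fderiv_apply hu hmn _

lemma contDiff_spaceDeriv {m n : WithTop ℕ∞} (hu : ContDiff ℝ n (uncurry u)) (hmn : m + 1 ≤ n)
    (e : E) : ContDiff ℝ m (uncurry (spaceDeriv e u)) := by
  rw [uncurry_spaceDeriv ((hu.of_le (le_add_self.trans hmn)).differentiable one_ne_zero)]
  exact contDiff_fderiv_apply hu hmn _

lemma fderiv_fderiv_apply_comm {g : E → ℝ} (hg : ContDiff ℝ 2 g) (x e e' : E) :
    fderiv ℝ (fun y => fderiv ℝ g y e) x e' = fderiv ℝ (fun y => fderiv ℝ g y e') x e := by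
  have hdiff : DifferentiableAt ℝ (fderiv ℝ g) x :=
    (hg.fderiv_right (m := 1) (by norm_num)).differentiable one_ne_zero x
  have hsymm : IsSymmSndFDerivAt ℝ g x := hg.contDiffAt.isSymmSndFDerivAt (by simp)
  rw [fderiv_clm_apply hdiff (by fun_prop), fderiv_clm_apply hdiff (by fun_prop)]
  simpa using hsymm e' e

lemma timeDeriv_spaceDeriv_comm (hu : ContDiff ℝ 2 (uncurry u)) (e : E) :
    timeDeriv (spaceDeriv e u) = spaceDeriv e (timeDeriv u) := by
  have hu₁ := hu.differentiable two_ne_zero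
  have ht := (contDiff_timeDeriv (m := 1) hu (by norm_num)).differentiable one_ne_zero
  have hs := (contDiff_spaceDeriv (m := 1) hu (by norm_num) e).differentiable one_ne_zero
  apply uncurry_injective
  rw [uncurry_timeDeriv hs, uncurry_spaceDeriv ht, uncurry_spaceDeriv hu₁, uncurry_timeDeriv hu₁]
  exact funext fun p => fderiv_fderiv_apply_comm hu p (0, e) (1, 0)

lemma support_timeDeriv_subset (hu : Differentiable ℝ (uncurry u)) {a b : ℝ} (hab : a < b)
    {K : Set E} (hsupp : ∀ t ∈ Icc a b, support (u t) ⊆ K) :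
    ∀ t ∈ Icc a b, support (timeDeriv u t) ⊆ K := by
  intro t ht
  refine support_subset_iff'.2 fun x hx => ?_
  have hzero : ∀ s ∈ Icc a b, u s x = 0 := fun s hs => support_subset_iff'.1 (hsupp s hs) x hx
  -- One-sided derivatives suffice at the endpoints, outside of which `u` is unconstrained.
  exact (uniqueDiffOn_Icc hab t ht).eq_deriv _ (hasDerivAt_timeDeriv hu t x).hasDerivWithinAt
    ((hasDerivWithinAt_const t (Icc a b) (0 : ℝ)).congr hzero (hzero t ht))

lemma support_spaceDeriv_subset {K : Set E} (hK : IsClosed K) {t : ℝ} (hsupp : support (u t) ⊆ K)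
    (e : E) : support (spaceDeriv e u t) ⊆ K := by
  have hfderiv : support (fderiv ℝ (u t)) ⊆ K :=
    (support_fderiv_subset ℝ).trans (closure_minimal hsupp hK)
  refine support_subset_iff'.2 fun x hx => ?_
  simp [spaceDeriv, support_subset_iff'.1 hfderiv x hx]

end Spacetime

/-! ### Weighted integrals of compactly supported functions -/

section WeightedIntegral

lemma integrable_mul_of_support_subset {Z : Type*} [TopologicalSpace Z] [T2Space Z]
    [MeasurableSpace Z] [OpensMeasurableSpace Z] {μ : Measure Z} {g k : Z → ℝ} {K : Set Z}
    (hK : IsCompact K) (hg : ContinuousOn g K) (hsupp : support g ⊆ K) (hk : IntegrableOn k K μ) :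
    Integrable (fun z => g z * k z) μ :=
  (integrableOn_iff_integrable_of_support_subset
    ((support_mul_subset_left g k).trans hsupp)).1 (hk.continuousOn_mul hg hK)

variable {Z : Type*} [NormedAddCommGroup Z] [MeasurableSpace Z] [OpensMeasurableSpace Z]
  {μ : Measure Z} [SFinite μ] {g : ℝ → Z → ℝ} {k : Z → ℝ} {K : Set Z} {a b : ℝ}

lemma integrable_uncurry_mul_prod (hab : a ≤ b) (hg : Continuous (uncurry g)) (hK : IsCompact K)
    (hsupp : ∀ t ∈ Icc a b, support (g t) ⊆ K) (hk : IntegrableOn k K μ) :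
    Integrable (uncurry fun t z => g t z * k z) ((volume.restrict (uIoc a b)).prod μ) := by
  have hk' : IntegrableOn (fun p : ℝ × Z => k p.2) (Icc a b ×ˢ K) (volume.prod μ) := by
    rw [IntegrableOn, ← Measure.prod_restrict]
    exact hk.comp_snd _
  have hcompact : IntegrableOn (uncurry fun t z => g t z * k z) (Icc a b ×ˢ K) (volume.prod μ) :=
    hk'.continuousOn_mul hg.continuousOn (isCompact_Icc.prod hK)
  have hstrip : IntegrableOn (uncurry fun t z => g t z * k z) (Icc a b ×ˢ univ)
      (volume.prod μ) := by
    refine hcompact.of_forall_sdiff_eq_zero (measurableSet_Icc.prod .univ) ?_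
    rintro ⟨t, z⟩ ⟨⟨ht, -⟩, hz⟩
    have hgz : g t z = 0 := support_subset_iff'.1 (hsupp t ht) z fun hzK => hz ⟨ht, hzK⟩
    simp [hgz]
  have hsub : uIoc a b ×ˢ (univ : Set Z) ⊆ Icc a b ×ˢ univ :=
    prod_mono_left (uIoc_of_le hab ▸ Ioc_subset_Icc_self)
  simpa only [IntegrableOn, ← Measure.prod_restrict, Measure.restrict_univ]
    using hstrip.mono_set hsub

lemma intervalIntegrable_integral_mul (hab : a ≤ b) (hg : Continuous (uncurry g))
    (hK : IsCompact K) (hsupp : ∀ t ∈ Icc a b, support (g t) ⊆ K) (hk : IntegrableOn k K μ) :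
    IntervalIntegrable (fun t => ∫ z, g t z * k z ∂μ) volume a b :=
  intervalIntegrable_iff.2 (integrable_uncurry_mul_prod hab hg hK hsupp hk).integral_prod_left

variable [NormedSpace ℝ Z]

lemma integral_mul_sub_eq_intervalIntegral_integral_timeDeriv_mul (hab : a < b)
    (hg : ContDiff ℝ 1 (uncurry g)) (hK : IsCompact K)
    (hsupp : ∀ t ∈ Icc a b, support (g t) ⊆ K) (hk : IntegrableOn k K μ) :
    (∫ z, g b z * k z ∂μ) - ∫ z, g a z * k z ∂μ
      = ∫ t in a..b, ∫ z, timeDeriv g t z * k z ∂μ := by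
  have hdiff := hg.differentiable one_ne_zero
  have hg' : Continuous (uncurry (timeDeriv g)) :=
    (contDiff_timeDeriv (m := 0) hg (by norm_num)).continuous
  have hint : ∀ t ∈ Icc a b, Integrable (fun z => g t z * k z) μ := fun t ht =>
    integrable_mul_of_support_subset hK (hg.continuous.uncurry_left t).continuousOn (hsupp t ht) hk
  have hFTC : ∀ z, ∫ t in a..b, timeDeriv g t z = g b z - g a z := fun z =>
    intervalIntegral.integral_eq_sub_of_hasDerivAt (fun t _ => hasDerivAt_timeDeriv hdiff t z)
      ((hg'.uncurry_right z).intervalIntegrable a b)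
  rw [intervalIntegral_integral_swap (integrable_uncurry_mul_prod hab.le hg' hK
      (support_timeDeriv_subset hdiff hab hsupp) hk),
    ← integral_sub (hint b (right_mem_Icc.2 hab.le)) (hint a (left_mem_Icc.2 hab.le))]
  simp only [intervalIntegral.integral_mul_const, hFTC, sub_mul]

end WeightedIntegral

/-! ### The quadratic part of the energy -/

section WaveEnergy

variable {d : ℕ} {a b : ℝ} {v : ℝ → EuclideanSpace ℝ (Fin d) → ℝ}
  {K : Set (EuclideanSpace ℝ (Fin d))}

/-- The energy `½ ∫ (u₁² + |∇u₀|²)` of the linear wave equation. -/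
noncomputable def waveEnergy (u₀ u₁ : EuclideanSpace ℝ (Fin d) → ℝ) : ℝ :=
  (1 / 2) * ∫ x, (u₁ x ^ 2 + ‖fderiv ℝ u₀ x‖ ^ 2)

lemma sum_sq_spaceDeriv_single (v : ℝ → EuclideanSpace ℝ (Fin d) → ℝ) (t : ℝ)
    (x : EuclideanSpace ℝ (Fin d)) :
    ∑ i, spaceDeriv (EuclideanSpace.single i 1) v t x ^ 2 = ‖fderiv ℝ (v t) x‖ ^ 2 := by
  simp [(EuclideanSpace.basisFun (Fin d) ℝ).norm_dual, spaceDeriv]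

lemma integral_fderiv_mul_fderiv_eq_neg {E : Type*} [NormedAddCommGroup E] [NormedSpace ℝ E]
    [FiniteDimensional ℝ E] [MeasurableSpace E] [BorelSpace E] {μ : Measure E} [μ.IsAddHaarMeasure]
    {u w : E → ℝ} (hu : ContDiff ℝ 2 u) (hw : ContDiff ℝ 1 w) (hsupp : HasCompactSupport w)
    (e : E) :
    ∫ x, fderiv ℝ u x e * fderiv ℝ w x e ∂μ
      = -∫ x, fderiv ℝ (fun y => fderiv ℝ u y e) x e * w x ∂μ := by
  have hu' : ContDiff ℝ 1 fun x => fderiv ℝ u x e := contDiff_fderiv_apply hu (by norm_num) e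
  have hu'' := (contDiff_fderiv_apply (m := 0) hu' (by norm_num) e).continuous
  have hw' := (contDiff_fderiv_apply (m := 0) hw (by norm_num) e).continuous
  exact integral_mul_fderiv_eq_neg_fderiv_mul_of_integrable
    ((hu''.mul hw.continuous).integrable_of_hasCompactSupport hsupp.mul_left)
    ((hu'.continuous.mul hw').integrable_of_hasCompactSupport (hsupp.fderiv_apply ℝ e).mul_left)
    ((hu'.continuous.mul hw.continuous).integrable_of_hasCompactSupport hsupp.mul_left)
    (fun x _ => hu'.differentiable one_ne_zero x) (fun x _ => hw.differentiable one_ne_zero x)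

lemma integral_sum_fderiv_mul_fderiv_eq_neg_integral_mul_euclidLaplacian
    {u w : EuclideanSpace ℝ (Fin d) → ℝ} (hu : ContDiff ℝ 2 u) (hw : ContDiff ℝ 1 w)
    (hsupp : HasCompactSupport w) :
    ∫ x, ∑ i, fderiv ℝ u x (EuclideanSpace.single i 1) * fderiv ℝ w x (EuclideanSpace.single i 1)
      = -∫ x, w x * euclidLaplacian d u x := by
  have hu' (e) : ContDiff ℝ 1 fun x => fderiv ℝ u x e := contDiff_fderiv_apply hu (by norm_num) e
  have hu'' (e) := (contDiff_fderiv_apply (m := 0) (hu' e) (by norm_num) e).continuous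
  have hw' (e) := (contDiff_fderiv_apply (m := 0) hw (by norm_num) e).continuous
  have hgrad (e) : Integrable fun x => fderiv ℝ u x e * fderiv ℝ w x e :=
    ((hu' e).continuous.mul (hw' e)).integrable_of_hasCompactSupport
      (hsupp.fderiv_apply ℝ e).mul_left
  have hlap (e) : Integrable fun x => fderiv ℝ (fun y => fderiv ℝ u y e) x e * w x :=
    ((hu'' e).mul hw.continuous).integrable_of_hasCompactSupport hsupp.mul_left
  simp_rw [euclidLaplacian, mul_comm (w _), Finset.sum_mul]
  rw [integral_finsetSum _ fun i _ => hgrad _, integral_finsetSum _ fun i _ => hlap _,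
    ← Finset.sum_neg_distrib]
  exact Finset.sum_congr rfl fun i _ => integral_fderiv_mul_fderiv_eq_neg hu hw hsupp _

lemma continuous_uncurry_euclidLaplacian (hv : ContDiff ℝ 2 (uncurry v)) :
    Continuous (uncurry fun t => euclidLaplacian d (v t)) := by
  have hsecond (e) : Continuous (uncurry (spaceDeriv e (spaceDeriv e v))) :=
    (contDiff_spaceDeriv (m := 0) (contDiff_spaceDeriv (m := 1) hv (by norm_num) e)
      (by norm_num) e).continuous
  exact continuous_finsetSum Finset.univ fun i _ => hsecond (EuclideanSpace.single i 1)

/-- The integrand `(∂ₜv)² + |∇v|²` of twice the energy of the linear wave equation. -/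
noncomputable def waveDensity (v : ℝ → EuclideanSpace ℝ (Fin d) → ℝ) (t : ℝ)
    (x : EuclideanSpace ℝ (Fin d)) : ℝ :=
  timeDeriv v t x ^ 2 + ∑ i, spaceDeriv (EuclideanSpace.single i 1) v t x ^ 2

lemma waveEnergy_eq_integral_waveDensity (v : ℝ → EuclideanSpace ℝ (Fin d) → ℝ) (t : ℝ) :
    waveEnergy (v t) (timeDeriv v t) = (1 / 2) * ∫ x, waveDensity v t x := by
  simp only [waveEnergy, waveDensity, sum_sq_spaceDeriv_single]

lemma contDiff_waveDensity (hv : ContDiff ℝ 2 (uncurry v)) :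
    ContDiff ℝ 1 (uncurry (waveDensity v)) :=
  ((contDiff_timeDeriv hv (by norm_num)).pow 2).add <|
    ContDiff.sum fun _ _ => (contDiff_spaceDeriv hv (by norm_num) _).pow 2

lemma support_waveDensity_subset (hK : IsClosed K) {t : ℝ} (hsupp : support (v t) ⊆ K)
    (hsupp' : support (timeDeriv v t) ⊆ K) : support (waveDensity v t) ⊆ K := by
  refine support_subset_iff'.2 fun x hx => ?_
  have hspace (e) := support_subset_iff'.1 (support_spaceDeriv_subset hK hsupp e) x hx
  simp [waveDensity, support_subset_iff'.1 hsupp' x hx, hspace]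

lemma timeDeriv_waveDensity (hv : ContDiff ℝ 2 (uncurry v)) (t : ℝ)
    (x : EuclideanSpace ℝ (Fin d)) :
    timeDeriv (waveDensity v) t x = 2 * (timeDeriv v t x * timeDeriv (timeDeriv v) t x
      + ∑ i, fderiv ℝ (v t) x (EuclideanSpace.single i 1) *
          fderiv ℝ (timeDeriv v t) x (EuclideanSpace.single i 1)) := by
  have htime := hasDerivAt_timeDeriv
    ((contDiff_timeDeriv (m := 1) hv (by norm_num)).differentiable one_ne_zero) t x
  have hspace (e) := hasDerivAt_timeDeriv
    ((contDiff_spaceDeriv (m := 1) hv (by norm_num) e).differentiable one_ne_zero) t x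
  refine ((htime.fun_pow 2).fun_add
    (HasDerivAt.fun_sum fun i _ => (hspace (EuclideanSpace.single i 1)).fun_pow 2)).deriv.trans ?_
  simp only [timeDeriv_spaceDeriv_comm hv, mul_add, Finset.mul_sum, mul_assoc, Nat.cast_ofNat,
    Nat.add_one_sub_one, pow_one, spaceDeriv]

lemma integral_timeDeriv_waveDensity (hv : ContDiff ℝ 2 (uncurry v)) {t : ℝ}
    (hsupp : HasCompactSupport (timeDeriv v t)) :
    ∫ x, timeDeriv (waveDensity v) t x
      = 2 * ∫ x, timeDeriv v t x * (timeDeriv (timeDeriv v) t x - euclidLaplacian d (v t) x) := by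
  have hvt : ContDiff ℝ 1 (uncurry (timeDeriv v)) := contDiff_timeDeriv hv (by norm_num)
  have hslice : ContDiff ℝ 2 (v t) := hv.comp (contDiff_prodMk_right t)
  have hslice' : ContDiff ℝ 1 (timeDeriv v t) := hvt.comp (contDiff_prodMk_right t)
  have hvtt : Continuous (timeDeriv (timeDeriv v) t) :=
    (contDiff_timeDeriv (m := 0) hvt (by norm_num)).continuous.uncurry_left t
  have htime : Integrable fun x => timeDeriv v t x * timeDeriv (timeDeriv v) t x :=
    (hslice'.continuous.mul hvtt).integrable_of_hasCompactSupport hsupp.mul_right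
  have hlap : Integrable fun x => timeDeriv v t x * euclidLaplacian d (v t) x :=
    (hslice'.continuous.mul ((continuous_uncurry_euclidLaplacian hv).uncurry_left
      t)).integrable_of_hasCompactSupport hsupp.mul_right
  have hgrad : Integrable fun x => ∑ i, fderiv ℝ (v t) x (EuclideanSpace.single i 1) *
      fderiv ℝ (timeDeriv v t) x (EuclideanSpace.single i 1) :=
    integrable_finsetSum _ fun i _ =>
      ((contDiff_fderiv_apply (m := 1) hslice (by norm_num) _).continuous.mul
        (contDiff_fderiv_apply (m := 0) hslice' (by norm_num)
          _).continuous).integrable_of_hasCompactSupport (hsupp.fderiv_apply ℝ _).mul_left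
  simp_rw [timeDeriv_waveDensity hv, mul_sub]
  rw [integral_const_mul, integral_add htime hgrad, integral_sub htime hlap,
    integral_sum_fderiv_mul_fderiv_eq_neg_integral_mul_euclidLaplacian hslice hslice' hsupp,
    sub_eq_add_neg]

lemma waveEnergy_sub_eq_intervalIntegral (hab : a < b) (hv : ContDiff ℝ 2 (uncurry v))
    (hK : IsCompact K) (hsupp : ∀ t ∈ Icc a b, support (v t) ⊆ K) :
    waveEnergy (v b) (timeDeriv v b) - waveEnergy (v a) (timeDeriv v a)
      = ∫ t in a..b, ∫ x, timeDeriv v t x *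
          (timeDeriv (timeDeriv v) t x - euclidLaplacian d (v t) x) := by
  have hsupp' := support_timeDeriv_subset (hv.differentiable two_ne_zero) hab hsupp
  have hdensity := integral_mul_sub_eq_intervalIntegral_integral_timeDeriv_mul (μ := volume)
    (k := fun _ => 1) hab (contDiff_waveDensity hv) hK
    (fun t ht => support_waveDensity_subset hK.isClosed (hsupp t ht) (hsupp' t ht))
    (continuousOn_const.integrableOn_compact hK)
  simp only [mul_one] at hdensity
  rw [waveEnergy_eq_integral_waveDensity, waveEnergy_eq_integral_waveDensity, ← mul_sub, hdensity,
    ← intervalIntegral.integral_const_mul]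
  refine intervalIntegral.integral_congr fun t ht => ?_
  rw [uIcc_of_le hab.le] at ht
  simp only [integral_timeDeriv_waveDensity hv (.of_support_subset_isCompact hK (hsupp' t ht))]
  ring

lemma continuous_uncurry_timeDeriv_mul_sub_euclidLaplacian (hv : ContDiff ℝ 2 (uncurry v)) :
    Continuous (uncurry fun t x =>
      timeDeriv v t x * (timeDeriv (timeDeriv v) t x - euclidLaplacian d (v t) x)) := by
  have hvt : ContDiff ℝ 1 (uncurry (timeDeriv v)) := contDiff_timeDeriv hv (by norm_num)
  have hvtt := (contDiff_timeDeriv (m := 0) hvt (by norm_num)).continuous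
  exact hvt.continuous.mul (hvtt.sub (continuous_uncurry_euclidLaplacian hv))

lemma integrable_timeDeriv_mul_sub_euclidLaplacian (hv : ContDiff ℝ 2 (uncurry v)) {t : ℝ}
    (hsupp : HasCompactSupport (timeDeriv v t)) :
    Integrable fun x =>
      timeDeriv v t x * (timeDeriv (timeDeriv v) t x - euclidLaplacian d (v t) x) :=
  ((continuous_uncurry_timeDeriv_mul_sub_euclidLaplacian hv).uncurry_left
    t).integrable_of_hasCompactSupport hsupp.mul_right

lemma intervalIntegrable_integral_timeDeriv_mul_sub_euclidLaplacian (hab : a < b)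
    (hv : ContDiff ℝ 2 (uncurry v)) (hK : IsCompact K)
    (hsupp : ∀ t ∈ Icc a b, support (v t) ⊆ K) :
    IntervalIntegrable (fun t => ∫ x, timeDeriv v t x *
      (timeDeriv (timeDeriv v) t x - euclidLaplacian d (v t) x)) volume a b := by
  have hsupp' := support_timeDeriv_subset (hv.differentiable two_ne_zero) hab hsupp
  simpa only [mul_one] using intervalIntegrable_integral_mul (μ := volume) (k := fun _ => 1) hab.le
    (continuous_uncurry_timeDeriv_mul_sub_euclidLaplacian hv) hK
    (fun t ht => (support_mul_subset_left _ _).trans (hsupp' t ht))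
    (continuousOn_const.integrableOn_compact hK)

end WaveEnergy

/-! ### The quartic part of the energy -/

section InteractionEnergy

variable {E : Type*}

/-- The weight `u(t, x)² u(t, y)²` of the pair potential in `interactionEnergy`, as a function on
spacetime over `E × E`. -/
def pairDensity (u : ℝ → E → ℝ) (t : ℝ) (z : E × E) : ℝ :=
  u t z.1 ^ 2 * u t z.2 ^ 2

lemma support_pairDensity_subset {u : ℝ → E → ℝ} {K : Set E} {t : ℝ} (hsupp : support (u t) ⊆ K) :
    support (pairDensity u t) ⊆ K ×ˢ K := by
  intro z hz
  simp only [pairDensity, mem_support, mul_ne_zero_iff, pow_ne_zero_iff two_ne_zero] at hz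
  exact ⟨hsupp hz.1, hsupp hz.2⟩

lemma support_mul_mul_sq_subset {w u : E → ℝ} {K : Set E} (hsupp : support u ⊆ K) :
    (support fun z : E × E => w z.1 * u z.1 * u z.2 ^ 2) ⊆ K ×ˢ K := by
  intro z hz
  simp only [mem_support, mul_ne_zero_iff, pow_ne_zero_iff two_ne_zero] at hz
  exact ⟨hsupp hz.1.2, hsupp hz.2⟩

section Derivative

variable [NormedAddCommGroup E] [NormedSpace ℝ E] {u : ℝ → E → ℝ}

lemma contDiff_pairDensity {n : WithTop ℕ∞} (hu : ContDiff ℝ n (uncurry u)) :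
    ContDiff ℝ n (uncurry (pairDensity u)) := by
  have hx : ContDiff ℝ n fun p : ℝ × E × E => u p.1 p.2.1 :=
    hu.comp (contDiff_fst.prodMk contDiff_snd.fst)
  have hy : ContDiff ℝ n fun p : ℝ × E × E => u p.1 p.2.2 :=
    hu.comp (contDiff_fst.prodMk contDiff_snd.snd)
  exact (hx.pow 2).mul (hy.pow 2)

lemma timeDeriv_pairDensity (hu : Differentiable ℝ (uncurry u)) (t : ℝ) (z : E × E) :
    timeDeriv (pairDensity u) t z = 2 * (timeDeriv u t z.1 * u t z.1 * u t z.2 ^ 2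
      + timeDeriv u t z.2 * u t z.2 * u t z.1 ^ 2) := by
  refine (((hasDerivAt_timeDeriv hu t z.1).fun_pow 2).fun_mul
    ((hasDerivAt_timeDeriv hu t z.2).fun_pow 2)).deriv.trans ?_
  push_cast
  ring

end Derivative

variable [MeasurableSpace E]

/-- The self-interaction energy `¼ ∬ u(x)² u(y)² k(x, y)` of a field `u` with pair potential `k`. -/
noncomputable def interactionEnergy (μ : Measure E) (k : E → E → ℝ) (u : E → ℝ) : ℝ :=
  (1 / 4) * ∫ x, ∫ y, u x ^ 2 * u y ^ 2 * k x y ∂μ ∂μ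

/-- The Hartree term `(∫ k(x, y) u(y)² dy) u(x)`, which for symmetric `k` is the variational
derivative of `interactionEnergy μ k`. -/
noncomputable def interactionForce (μ : Measure E) (k : E → E → ℝ) (u : E → ℝ) (x : E) : ℝ :=
  (∫ y, k x y * u y ^ 2 ∂μ) * u x

lemma integral_mul_mul_sq_mul_eq_mul_interactionForce (μ : Measure E) (k : E → E → ℝ)
    (w u : E → ℝ) (x : E) :
    ∫ y, w x * u x * u y ^ 2 * k x y ∂μ = w x * interactionForce μ k u x := by
  simp_rw [interactionForce, mul_assoc, integral_const_mul, mul_comm (k x _), mul_comm (u x)]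

variable [NormedAddCommGroup E] [OpensMeasurableSpace E] [SecondCountableTopology E]
  {μ : Measure E} {k : E → E → ℝ} {K : Set E}

lemma integrable_mul_mul_sq_mul {w u : E → ℝ} (hw : Continuous w) (hu : Continuous u)
    (hK : IsCompact K) (hsupp : support u ⊆ K)
    (hk : IntegrableOn (uncurry k) (K ×ˢ K) (μ.prod μ)) :
    Integrable (fun z : E × E => w z.1 * u z.1 * u z.2 ^ 2 * k z.1 z.2) (μ.prod μ) :=
  integrable_mul_of_support_subset (hK.prod hK) (by fun_prop) (support_mul_mul_sq_subset hsupp) hk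

variable [SFinite μ]

lemma integrable_mul_interactionForce {w u : E → ℝ} (hw : Continuous w) (hu : Continuous u)
    (hK : IsCompact K) (hsupp : support u ⊆ K)
    (hk : IntegrableOn (uncurry k) (K ×ˢ K) (μ.prod μ)) :
    Integrable (fun x => w x * interactionForce μ k u x) μ := by
  simpa only [integral_mul_mul_sq_mul_eq_mul_interactionForce]
    using (integrable_mul_mul_sq_mul hw hu hK hsupp hk).integral_prod_left

lemma integral_prod_mul_mul_sq_mul {w u : E → ℝ} (hw : Continuous w) (hu : Continuous u)
    (hK : IsCompact K) (hsupp : support u ⊆ K)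
    (hk : IntegrableOn (uncurry k) (K ×ˢ K) (μ.prod μ)) :
    ∫ z : E × E, w z.1 * u z.1 * u z.2 ^ 2 * k z.1 z.2 ∂μ.prod μ
      = ∫ x, w x * interactionForce μ k u x ∂μ := by
  simp_rw [integral_prod _ (integrable_mul_mul_sq_mul hw hu hK hsupp hk),
    integral_mul_mul_sq_mul_eq_mul_interactionForce]

variable {u : ℝ → E → ℝ} {a b : ℝ}

lemma interactionEnergy_eq_integral_pairDensity {t : ℝ} (hu : Continuous (u t)) (hK : IsCompact K)
    (hsupp : support (u t) ⊆ K) (hk : IntegrableOn (uncurry k) (K ×ˢ K) (μ.prod μ)) :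
    interactionEnergy μ k (u t) = (1 / 4) * ∫ z, pairDensity u t z * uncurry k z ∂μ.prod μ := by
  have hint : Integrable (fun z => pairDensity u t z * uncurry k z) (μ.prod μ) :=
    integrable_mul_of_support_subset (hK.prod hK) (by unfold pairDensity; fun_prop)
      (support_pairDensity_subset hsupp) hk
  rw [integral_prod _ hint]
  rfl

variable [NormedSpace ℝ E]

lemma integral_timeDeriv_pairDensity_mul (hu : ContDiff ℝ 1 (uncurry u)) (hK : IsCompact K)
    {t : ℝ} (hsupp : support (u t) ⊆ K) (hk : IntegrableOn (uncurry k) (K ×ˢ K) (μ.prod μ))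
    (hsymm : ∀ x y, k x y = k y x) :
    ∫ z, timeDeriv (pairDensity u) t z * uncurry k z ∂μ.prod μ
      = 4 * ∫ x, timeDeriv u t x * interactionForce μ k (u t) x ∂μ := by
  have hslice : Continuous (u t) := hu.continuous.uncurry_left t
  have hslice' : Continuous (timeDeriv u t) :=
    (contDiff_timeDeriv (m := 0) hu (by norm_num)).continuous.uncurry_left t
  set P : E × E → ℝ := fun z => timeDeriv u t z.1 * u t z.1 * u t z.2 ^ 2 * k z.1 z.2 with hP
  have hint : Integrable P (μ.prod μ) := integrable_mul_mul_sq_mul hslice' hslice hK hsupp hk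
  have hint' : Integrable (fun z => P z.swap) (μ.prod μ) := hint.swap
  have hswap (z) : timeDeriv (pairDensity u) t z * uncurry k z = 2 * (P z + P z.swap) := by
    rw [timeDeriv_pairDensity (hu.differentiable one_ne_zero)]
    simp only [hP, uncurry, Prod.fst_swap, Prod.snd_swap, hsymm z.2 z.1]
    ring
  simp_rw [hswap]
  rw [integral_const_mul, integral_add hint hint', integral_prod_swap P,
    integral_prod_mul_mul_sq_mul hslice' hslice hK hsupp hk]
  ring

lemma interactionEnergy_sub_eq_intervalIntegral (hab : a < b) (hu : ContDiff ℝ 1 (uncurry u))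
    (hK : IsCompact K) (hsupp : ∀ t ∈ Icc a b, support (u t) ⊆ K)
    (hk : IntegrableOn (uncurry k) (K ×ˢ K) (μ.prod μ)) (hsymm : ∀ x y, k x y = k y x) :
    interactionEnergy μ k (u b) - interactionEnergy μ k (u a)
      = ∫ t in a..b, ∫ x, timeDeriv u t x * interactionForce μ k (u t) x ∂μ := by
  have henergy : ∀ t ∈ Icc a b, interactionEnergy μ k (u t)
      = (1 / 4) * ∫ z, pairDensity u t z * uncurry k z ∂μ.prod μ := fun t ht =>
    interactionEnergy_eq_integral_pairDensity (hu.continuous.uncurry_left t) hK (hsupp t ht) hk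
  rw [henergy b (right_mem_Icc.2 hab.le), henergy a (left_mem_Icc.2 hab.le), ← mul_sub,
    integral_mul_sub_eq_intervalIntegral_integral_timeDeriv_mul hab (contDiff_pairDensity hu)
      (hK.prod hK) (fun t ht => support_pairDensity_subset (hsupp t ht)) hk,
    ← intervalIntegral.integral_const_mul]
  refine intervalIntegral.integral_congr fun t ht => ?_
  rw [uIcc_of_le hab.le] at ht
  simp only [integral_timeDeriv_pairDensity_mul hu hK (hsupp t ht) hk hsymm]
  ring

lemma intervalIntegrable_integral_timeDeriv_mul_interactionForce (hab : a ≤ b)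
    (hu : ContDiff ℝ 1 (uncurry u)) (hK : IsCompact K) (hsupp : ∀ t ∈ Icc a b, support (u t) ⊆ K)
    (hk : IntegrableOn (uncurry k) (K ×ˢ K) (μ.prod μ)) :
    IntervalIntegrable (fun t => ∫ x, timeDeriv u t x * interactionForce μ k (u t) x ∂μ)
      volume a b := by
  have hu' : Continuous (uncurry (timeDeriv u)) :=
    (contDiff_timeDeriv (m := 0) hu (by norm_num)).continuous
  have hprod : IntervalIntegrable (fun t => ∫ z : E × E, timeDeriv u t z.1 * u t z.1 *
      u t z.2 ^ 2 * uncurry k z ∂μ.prod μ) volume a b := by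
    refine intervalIntegrable_integral_mul hab ?_ (hK.prod hK)
      (fun t ht => support_mul_mul_sq_subset (hsupp t ht)) hk
    have hu₀ := hu.continuous
    fun_prop
  refine hprod.congr fun t ht => ?_
  have ht' : t ∈ Icc a b := Ioc_subset_Icc_self (uIoc_of_le hab ▸ ht)
  exact integral_prod_mul_mul_sq_mul (hu'.uncurry_left t) (hu.continuous.uncurry_left t) hK
    (hsupp t ht') hk

end InteractionEnergy

/-! ### Integrability of the kernel `|x - y|^{-α}` -/

section RieszKernel

variable {E : Type*} [NormedAddCommGroup E] [MeasurableSpace E] [BorelSpace E] {μ : Measure E}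

lemma integrableOn_prod_comp_sub [SecondCountableTopology E] [SFinite μ] [μ.IsAddRightInvariant]
    [IsFiniteMeasureOnCompacts μ] {f : E → ℝ} (hf : LocallyIntegrable f μ) {K : Set E}
    (hK : IsCompact K) :
    IntegrableOn (fun z : E × E => f (z.1 - z.2)) (K ×ˢ K) (μ.prod μ) := by
  have hdiff : IsCompact ((fun z : E × E => z.1 - z.2) '' K ×ˢ K) :=
    (hK.prod hK).image continuous_sub
  have hprod : IntegrableOn (fun z : E × E => f z.1) (((fun z : E × E => z.1 - z.2) '' K ×ˢ K) ×ˢ K)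
      (μ.prod μ) := by
    have : IsFiniteMeasure (μ.restrict K) := isFiniteMeasure_restrict.2 hK.measure_ne_top
    rw [IntegrableOn, ← Measure.prod_restrict]
    exact (hf.integrableOn_isCompact hdiff).comp_fst _
  have hshear := (measurePreserving_sub_prod μ μ).restrict_preimage
    (hdiff.measurableSet.prod hK.measurableSet)
  exact IntegrableOn.mono_set (hshear.integrable_comp_of_integrable hprod) fun z hz =>
    ⟨mem_image_of_mem _ hz, hz.2⟩

lemma locallyIntegrable_norm_rpow_neg [NormedSpace ℝ E] [FiniteDimensional ℝ E]
    [μ.IsAddHaarMeasure] [Nontrivial E] {α : ℝ} (hα : α < Module.finrank ℝ E) :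
    LocallyIntegrable (fun x : E => ‖x‖ ^ (-α)) μ := by
  refine locallyIntegrable_of_norm_le_rpow (C := 1) Module.finrank_pos hα (.of_forall fun x => ?_)
    (by fun_prop : Measurable fun x : E => ‖x‖ ^ (-α)).aestronglyMeasurable
  rw [Real.norm_of_nonneg (by positivity), one_mul]

end RieszKernel

/-! ### The energy identity -/

lemma waveEnergy_add_interactionEnergy_sub_eq_neg_intervalIntegral {d : ℕ} {a b : ℝ} (hab : a ≤ b)
    {v F : ℝ → EuclideanSpace ℝ (Fin d) → ℝ}
    {k : EuclideanSpace ℝ (Fin d) → EuclideanSpace ℝ (Fin d) → ℝ}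
    {K : Set (EuclideanSpace ℝ (Fin d))} (hv : ContDiff ℝ 2 (uncurry v)) (hK : IsCompact K)
    (hsupp : ∀ t ∈ Icc a b, support (v t) ⊆ K) (hk : IntegrableOn (uncurry k) (K ×ˢ K))
    (hsymm : ∀ x y, k x y = k y x)
    (hPDE : ∀ t ∈ Icc a b, ∀ x,
      timeDeriv (timeDeriv v) t x = euclidLaplacian d (v t) x - F t x) :
    (waveEnergy (v b) (timeDeriv v b) + interactionEnergy volume k (v b))
        - (waveEnergy (v a) (timeDeriv v a) + interactionEnergy volume k (v a))
      = -∫ t in a..b, ∫ x, timeDeriv v t x * (F t x - interactionForce volume k (v t) x) := by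
  rcases hab.eq_or_lt with rfl | hab
  · simp
  have hv₁ : ContDiff ℝ 1 (uncurry v) := hv.of_le (by norm_num)
  have hsupp' := support_timeDeriv_subset (hv.differentiable two_ne_zero) hab hsupp
  rw [add_sub_add_comm, waveEnergy_sub_eq_intervalIntegral hab hv hK hsupp,
    interactionEnergy_sub_eq_intervalIntegral hab hv₁ hK hsupp hk hsymm,
    ← intervalIntegral.integral_add
      (intervalIntegrable_integral_timeDeriv_mul_sub_euclidLaplacian hab hv hK hsupp)
      (intervalIntegrable_integral_timeDeriv_mul_interactionForce hab.le hv₁ hK hsupp hk),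
    ← intervalIntegral.integral_neg]
  refine intervalIntegral.integral_congr fun t ht => ?_
  rw [uIcc_of_le hab.le] at ht
  have hwave := integrable_timeDeriv_mul_sub_euclidLaplacian hv
    (.of_support_subset_isCompact hK (hsupp' t ht))
  have hforce := integrable_mul_interactionForce
    ((contDiff_timeDeriv (m := 0) hv₁ (by norm_num)).continuous.uncurry_left t)
    (hv.continuous.uncurry_left t) hK (hsupp t ht) hk
  beta_reduce
  rw [← integral_add hwave hforce, ← integral_neg]
  refine integral_congr_ae (.of_forall fun x => ?_)
  simp only [hPDE t ht x]
  ring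

lemma hartreeEnergy_eq_zero {d : ℕ} {u₀ u₁ : EuclideanSpace ℝ (Fin d) → ℝ} (hu₀ : ∀ x, u₀ x = 0)
    (hu₁ : ∀ x, u₁ x = 0) : hartreeEnergy d u₀ u₁ = 0 := by
  obtain rfl : u₀ = 0 := funext hu₀
  simp [hartreeEnergy, hu₁]

theorem perturbed_hartree_wave_energy_identity_general {d : ℕ} (hd : 5 ≤ d) {a b : ℝ} (hab : a ≤ b)
    {v F : ℝ → EuclideanSpace ℝ (Fin d) → ℝ} {K : Set (EuclideanSpace ℝ (Fin d))}
    (hv : ContDiff ℝ 2 (uncurry v)) (hK : IsCompact K) (hsupp : ∀ t ∈ Icc a b, support (v t) ⊆ K)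
    (hPDE : ∀ t ∈ Icc a b, ∀ x,
      timeDeriv (timeDeriv v) t x = euclidLaplacian d (v t) x - F t x) :
    hartreeEnergy d (v b) (timeDeriv v b) - hartreeEnergy d (v a) (timeDeriv v a)
      = -∫ t in a..b, ∫ x, timeDeriv v t x * (F t x - hartreeNonlinearity d (v t) x) := by
  have : NeZero d := ⟨by omega⟩
  have hdim : (4 : ℝ) < Module.finrank ℝ (EuclideanSpace ℝ (Fin d)) := by
    rw [finrank_euclideanSpace_fin]
    exact_mod_cast hd
  exact waveEnergy_add_interactionEnergy_sub_eq_neg_intervalIntegral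
    (k := fun x y => ‖x - y‖ ^ (-4 : ℝ)) hab hv hK hsupp
    (integrableOn_prod_comp_sub (locallyIntegrable_norm_rpow_neg hdim) hK)
    (fun x y => by rw [norm_sub_rev]) hPDE

/-- Energy identity for smooth compactly supported solutions of the perturbed Hartree
nonlinear wave equation `∂²_t v = Δv - 𝒩(v + f)` with zero initial data:
`E(v(t), ∂_t v(t)) = - ∫₀ᵗ ∫ ∂_{t'} v (𝒩(v+f) - 𝒩(v)) dx dt'`. -/
theorem perturbed_hartree_wave_energy_identity (d : ℕ) (hd : 5 ≤ d) (T : ℝ) (hT : 0 < T)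
    (v f : ℝ → EuclideanSpace ℝ (Fin d) → ℝ)
    (hvsmooth : ContDiff ℝ (⊤ : ℕ∞) (fun p : ℝ × EuclideanSpace ℝ (Fin d) => v p.1 p.2))
    (hfsmooth : ContDiff ℝ (⊤ : ℕ∞) (fun p : ℝ × EuclideanSpace ℝ (Fin d) => f p.1 p.2))
    (R : ℝ) (hR : 0 < R)
    (hsupp : ∀ t ∈ Set.Icc (0 : ℝ) T,
      Function.support (v t) ∪ Function.support (f t)
        ⊆ Metric.closedBall (0 : EuclideanSpace ℝ (Fin d)) R)
    (hPDE : ∀ t ∈ Set.Icc (0 : ℝ) T, ∀ x,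
      deriv (fun s => deriv (fun s' => v s' x) s) t
        = euclidLaplacian d (v t) x
          - hartreeNonlinearity d (fun y => v t y + f t y) x)
    (hv0 : ∀ x, v 0 x = 0) (hv0' : ∀ x, deriv (fun s => v s x) 0 = 0) :
    ∀ t ∈ Set.Icc (0 : ℝ) T,
      hartreeEnergy d (v t) (fun x => deriv (fun s => v s x) t)
        = - ∫ t' in (0 : ℝ)..t, ∫ x, deriv (fun s => v s x) t' *
            (hartreeNonlinearity d (fun y => v t' y + f t' y) x
              - hartreeNonlinearity d (v t') x) := by
  intro t ht
  have hIcc : Set.Icc 0 t ⊆ Set.Icc 0 T := Icc_subset_Icc_right ht.2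
  have hbalance := perturbed_hartree_wave_energy_identity_general hd ht.1
    (mod_cast contDiff_infty.1 hvsmooth 2) (isCompact_closedBall 0 R)
    (fun s hs => subset_union_left.trans (hsupp s (hIcc hs))) (fun s hs => hPDE s (hIcc hs))
  rwa [hartreeEnergy_eq_zero (u₁ := timeDeriv v 0) hv0 hv0', sub_zero] at hbalance
end

section
/- There exists a constant C > 0 such that for every Schwartz function v : ℝ⁵ → ℝ, ‖v‖_{L^{10/3}(ℝ⁵)} ≤ C ‖∇v‖^{1/5}_{L²(ℝ⁵)} ‖ |·|^{-19/4} ∗ v ‖^{4/5}_{L⁴(ℝ⁵)}, where ( |·|^{-19/4} ∗ v )(x) = ∫_{ℝ⁵} |x − y|^{-19/4} v(y) dy. -/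
open MeasureTheory ENNReal SchwartzMap

/-!
Write the kernel `‖x‖ ^ (-γ)` as a superposition of heat kernels (subordination). Then the heat flow
of `w = ‖·‖ ^ (-γ) ∗ v` is a fractional integral in time, of order `β = (d - γ) / 2`, of the heat
flow of `v`, and Abel's inversion formula recovers from it the average of the heat flow of `v` over
times in `(0, T]`. Since heat kernels are radially decreasing, this average at `x` is at most a
constant times `T ^ (-β) * M w x`, where `M` is the Hardy–Littlewood maximal function, while it
differs from `v x` by at most a constant times `√T * M (∇v) x`. Optimising in `T` gives the
pointwise bound `|v| ≤ C * (M (∇v)) ^ a * (M w) ^ b` with `a = 2 * β * b`, `a + b = 1`, and the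
`L^p` estimate follows from Hölder's inequality and the maximal theorem.
-/

namespace RieszInterp

open Set Metric Filter

section MaximalFunction

variable {X : Type*} [PseudoMetricSpace X] [MeasurableSpace X] {μ : Measure X}
  {f g : X → ℝ≥0∞} {A : NNReal} {l B : ℝ≥0∞} {x : X}

/-- The uncentred Hardy–Littlewood maximal function of `f`: the supremum of the averages of `f` over
the open balls containing a given point. -/
noncomputable def hlMaximal (μ : Measure X) (f : X → ℝ≥0∞) (x : X) : ℝ≥0∞ :=
  ⨆ (c : X) (r : ℝ) (_ : x ∈ ball c r), ⨍⁻ y in ball c r, f y ∂μ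

lemma lt_hlMaximal_iff :
    l < hlMaximal μ f x ↔ ∃ c r, x ∈ ball c r ∧ l < ⨍⁻ y in ball c r, f y ∂μ := by
  simp only [hlMaximal, lt_iSup_iff, exists_prop]

lemma isOpen_lt_hlMaximal : IsOpen {x | l < hlMaximal μ f x} := by
  simp only [lt_hlMaximal_iff, ofPred_exists]
  exact isOpen_iUnion fun c => isOpen_iUnion fun r => isOpen_ball.inter isOpen_const

lemma measurable_hlMaximal [OpensMeasurableSpace X] : Measurable (hlMaximal μ f) :=
  measurable_of_Ioi fun _ => isOpen_lt_hlMaximal.measurableSet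

lemma setLAverage_ball_le_hlMaximal {c : X} {r : ℝ} (hx : x ∈ ball c r) :
    ⨍⁻ y in ball c r, f y ∂μ ≤ hlMaximal μ f x :=
  le_iSup₂_of_le c r (le_iSup_of_le hx le_rfl)

lemma hlMaximal_mono (h : f ≤ g) (x : X) : hlMaximal μ f x ≤ hlMaximal μ g x :=
  iSup_mono fun _ => iSup_mono fun _ => iSup_mono fun _ => lintegral_mono h

lemma hlMaximal_le_of_le (hf : ∀ x, f x ≤ B) (x : X) : hlMaximal μ f x ≤ B :=
  iSup₂_le fun c r => iSup_le fun _ => by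
    calc ⨍⁻ y in ball c r, f y ∂μ ≤ ⨍⁻ _ in ball c r, B ∂μ := lintegral_mono hf
      _ ≤ B := by
        rw [setLAverage_eq, setLIntegral_const]
        exact ENNReal.div_le_of_le_mul le_rfl

lemma hlMaximal_add_const_le (f : X → ℝ≥0∞) (l : ℝ≥0∞) (x : X) :
    hlMaximal μ (fun y => l + f y) x ≤ l + hlMaximal μ f x :=
  iSup₂_le fun c r => iSup_le fun hx => by
    calc ⨍⁻ y in ball c r, (l + f y) ∂μ
        = (⨍⁻ _ in ball c r, l ∂μ) + ⨍⁻ y in ball c r, f y ∂μ :=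
          lintegral_add_left measurable_const _
      _ ≤ l + hlMaximal μ f x := by
        gcongr
        · rw [setLAverage_eq, setLIntegral_const]
          exact ENNReal.div_le_of_le_mul le_rfl
        · exact setLAverage_ball_le_hlMaximal hx

lemma exists_disjoint_balls_of_isCompact_subset {K : Set X} (hK : IsCompact K)
    (hKl : K ⊆ {x | l < hlMaximal μ f x}) :
    ∃ u : Set (X × ℝ), u.Countable ∧ (u.PairwiseDisjoint fun p => ball p.1 p.2) ∧
      (∀ p ∈ u, 0 < p.2 ∧ l < ⨍⁻ y in ball p.1 p.2, f y ∂μ) ∧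
      K ⊆ ⋃ p ∈ u, closedBall p.1 (5 * p.2) := by
  set t : Set (X × ℝ) := {p | 0 < p.2 ∧ l < ⨍⁻ y in ball p.1 p.2, f y ∂μ}
  obtain ⟨s, hst, hs, hKs⟩ : ∃ s ⊆ t, s.Finite ∧ K ⊆ ⋃ p ∈ s, ball p.1 p.2 :=
    hK.elim_finite_subcover_image (fun _ _ => isOpen_ball) fun x hx => by
      obtain ⟨c, r, hxc, hlt⟩ := lt_hlMaximal_iff.1 (hKl hx)
      exact mem_biUnion (x := (c, r)) ⟨pos_of_mem_ball hxc, hlt⟩ hxc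
  obtain ⟨R, hR⟩ := (hs.image Prod.snd).bddAbove
  obtain ⟨u, hus, hdisj, hcov⟩ := Vitali.exists_disjoint_subfamily_covering_enlargement_closedBall
    s Prod.fst Prod.snd R (fun p hp => hR (mem_image_of_mem _ hp)) 5 (by norm_num)
  refine ⟨u, (hs.subset hus).countable, hdisj.mono fun p => ball_subset_closedBall,
    fun p hp => hst (hus hp), hKs.trans (iUnion₂_subset fun p hp => ?_)⟩
  obtain ⟨q, hq, hpq⟩ := hcov p hp
  exact ball_subset_closedBall.trans
    (hpq.trans (subset_biUnion_of_mem (u := fun q : X × ℝ => closedBall q.1 (5 * q.2)) hq))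

variable [ProperSpace X] [IsFiniteMeasureOnCompacts μ]

lemma setLIntegral_ball_le {c : X} {r : ℝ} (hx : x ∈ ball c r) :
    ∫⁻ y in ball c r, f y ∂μ ≤ μ (ball c r) * hlMaximal μ f x := by
  rw [← measure_mul_setLAverage f measure_ball_lt_top.ne]
  gcongr
  exact setLAverage_ball_le_hlMaximal hx

variable [BorelSpace X]

theorem mul_meas_lt_hlMaximal_le
    (hA : ∀ (c : X) (r : ℝ), 0 < r → μ (closedBall c (5 * r)) ≤ A * μ (ball c r)) :
    l * μ {x | l < hlMaximal μ f x} ≤ A * ∫⁻ x, f x ∂μ := by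
  rw [isOpen_lt_hlMaximal.measure_eq_iSup_isCompact, ENNReal.mul_iSup]
  refine iSup_le fun K => ?_
  simp only [ENNReal.mul_iSup]
  refine iSup₂_le fun hKl hK => ?_
  obtain ⟨u, hu, hdisj, hul, hKu⟩ := exists_disjoint_balls_of_isCompact_subset hK hKl
  have hball (p : u) : l * μ (closedBall p.1.1 (5 * p.1.2)) ≤
      A * ∫⁻ y in ball p.1.1 p.1.2, f y ∂μ := by
    obtain ⟨hr, hlt⟩ := hul p p.2
    calc l * μ (closedBall p.1.1 (5 * p.1.2))
        ≤ (⨍⁻ y in ball p.1.1 p.1.2, f y ∂μ) * (A * μ (ball p.1.1 p.1.2)) := by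
          gcongr; exact hA _ _ hr
      _ = A * ∫⁻ y in ball p.1.1 p.1.2, f y ∂μ := by
          rw [← measure_mul_setLAverage f measure_ball_lt_top.ne]; ring
  calc l * μ K
      ≤ l * ∑' p : u, μ (closedBall p.1.1 (5 * p.1.2)) := by
        gcongr; exact (measure_mono hKu).trans (measure_biUnion_le _ hu _)
    _ ≤ ∑' p : u, A * ∫⁻ y in ball p.1.1 p.1.2, f y ∂μ := by
        rw [← ENNReal.tsum_mul_left]; exact ENNReal.tsum_le_tsum hball
    _ = A * ∫⁻ y in ⋃ p ∈ u, ball p.1 p.2, f y ∂μ := by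
        rw [ENNReal.tsum_mul_left, lintegral_biUnion hu (fun _ _ => measurableSet_ball) hdisj]
    _ ≤ A * ∫⁻ x, f x ∂μ := by gcongr; exact Measure.restrict_le_self

lemma mul_meas_two_mul_lt_hlMaximal_le
    (hA : ∀ (c : X) (r : ℝ), 0 < r → μ (closedBall c (5 * r)) ≤ A * μ (ball c r))
    (hf : Measurable f) (hl : l ≠ ∞) :
    l * μ {x | 2 * l < hlMaximal μ f x} ≤ A * ∫⁻ x in {x | l < f x}, f x ∂μ := by
  set g := {x | l < f x}.indicator f
  have hfg (x : X) : hlMaximal μ f x ≤ l + hlMaximal μ g x :=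
    (hlMaximal_mono (fun y => by by_cases hy : l < f y <;> simp_all [g]) x).trans
      (hlMaximal_add_const_le g l x)
  calc l * μ {x | 2 * l < hlMaximal μ f x} ≤ l * μ {x | l < hlMaximal μ g x} := by
        refine mul_le_mul_right (measure_mono fun x hx => ?_) l
        exact (ENNReal.add_lt_add_iff_left hl).1 ((two_mul l ▸ hx).trans_le (hfg x))
    _ ≤ A * ∫⁻ x, g x ∂μ := mul_meas_lt_hlMaximal_le hA
    _ = A * ∫⁻ x in {x | l < f x}, f x ∂μ := by
        rw [lintegral_indicator (measurableSet_lt measurable_const hf)]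

end MaximalFunction

section LayerCake

lemma ofReal_rpow_eq_lintegral {p : ℝ} (hp : 0 < p) {a : ℝ} (ha : 0 ≤ a) :
    ENNReal.ofReal a ^ p = ∫⁻ t in Ioi (0 : ℝ), ENNReal.ofReal (p * t ^ (p - 1)) *
      {t : ℝ | ENNReal.ofReal t < ENNReal.ofReal a}.indicator 1 t := by
  have hind : ∀ t ∈ Ioi (0 : ℝ), ENNReal.ofReal (p * t ^ (p - 1)) *
      {t : ℝ | ENNReal.ofReal t < ENNReal.ofReal a}.indicator 1 t =
      (Iio a).indicator (fun t => ENNReal.ofReal (p * t ^ (p - 1))) t := fun t ht => by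
    by_cases h : t < a <;> simp [h, ENNReal.ofReal_lt_ofReal_iff_of_nonneg (le_of_lt ht)]
  have hint : IntervalIntegrable (fun t : ℝ => t ^ (p - 1)) volume 0 a :=
    intervalIntegral.intervalIntegrable_rpow' (by linarith)
  have hnn : 0 ≤ᵐ[volume.restrict (Ioo 0 a)] fun t => p * t ^ (p - 1) :=
    (ae_restrict_iff' measurableSet_Ioo).2 (.of_forall fun t ht =>
      mul_nonneg hp.le (Real.rpow_nonneg ht.1.le _))
  rw [setLIntegral_congr_fun measurableSet_Ioi hind, lintegral_indicator measurableSet_Iio,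
    Measure.restrict_restrict measurableSet_Iio, Iio_inter_Ioi,
    ← ofReal_integral_eq_lintegral_ofReal _ hnn, ← integral_Ioc_eq_integral_Ioo,
    ← intervalIntegral.integral_of_le ha, intervalIntegral.integral_const_mul,
    integral_rpow (.inl (by linarith)), sub_add_cancel, Real.zero_rpow hp.ne', sub_zero,
    mul_div_cancel₀ _ hp.ne', ENNReal.ofReal_rpow_of_nonneg ha hp.le]
  exact ((intervalIntegrable_iff_integrableOn_Ioo_of_le ha).1 hint).const_mul p

lemma rpow_eq_lintegral_indicator {p : ℝ} (hp : 0 < p) (a : ℝ≥0∞) :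
    a ^ p = ∫⁻ t in Ioi (0 : ℝ), ENNReal.ofReal (p * t ^ (p - 1)) *
      {t : ℝ | ENNReal.ofReal t < a}.indicator 1 t := by
  rcases eq_or_ne a ∞ with rfl | ha
  · rw [ENNReal.top_rpow_of_pos hp]
    refine (ENNReal.eq_top_of_forall_nnreal_le fun r => ?_).symm
    calc (r : ℝ≥0∞) = ENNReal.ofReal ((r : ℝ) ^ p⁻¹) ^ p := by
          rw [ENNReal.ofReal_rpow_of_nonneg (by positivity) hp.le,
            Real.rpow_inv_rpow r.coe_nonneg hp.ne', ENNReal.ofReal_coe_nnreal]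
      _ ≤ _ := by
          rw [ofReal_rpow_eq_lintegral hp (by positivity)]
          gcongr
          exact le_top
  · rw [← ENNReal.ofReal_toReal ha]
    exact ofReal_rpow_eq_lintegral hp ENNReal.toReal_nonneg

variable {X : Type*} [MeasurableSpace X] {μ : Measure X} [SFinite μ] {f F : X → ℝ≥0∞} {A : NNReal}

lemma lintegral_mul_rpow_eq {p : ℝ} (hp : 0 < p) (hf : Measurable f) (hF : Measurable F) :
    ∫⁻ x, F x * f x ^ p ∂μ = ∫⁻ t in Ioi (0 : ℝ), ENNReal.ofReal (p * t ^ (p - 1)) *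
      ∫⁻ x in {x | ENNReal.ofReal t < f x}, F x ∂μ := by
  have hset : MeasurableSet {z : X × ℝ | ENNReal.ofReal z.2 < f z.1} :=
    measurableSet_lt (by fun_prop) (by fun_prop)
  have hind : Measurable fun z : X × ℝ => {t : ℝ | ENNReal.ofReal t < f z.1}.indicator
      (1 : ℝ → ℝ≥0∞) z.2 := measurable_one.indicator hset
  calc ∫⁻ x, F x * f x ^ p ∂μ
      = ∫⁻ x, (∫⁻ t : ℝ in Ioi 0, F x * (ENNReal.ofReal (p * t ^ (p - 1)) *
          {t : ℝ | ENNReal.ofReal t < f x}.indicator 1 t)) ∂μ := by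
        refine lintegral_congr fun x => ?_
        rw [lintegral_const_mul, rpow_eq_lintegral_indicator hp]
        exact .mul (by fun_prop) (hind.comp measurable_prodMk_left)
    _ = ∫⁻ t : ℝ in Ioi 0, ∫⁻ x, F x * (ENNReal.ofReal (p * t ^ (p - 1)) *
          {t : ℝ | ENNReal.ofReal t < f x}.indicator 1 t) ∂μ :=
        lintegral_lintegral_swap (.mul (by fun_prop) (.mul (by fun_prop) hind.aemeasurable))
    _ = _ := by
        refine lintegral_congr fun t => ?_
        have hset_t : MeasurableSet {x | ENNReal.ofReal t < f x} :=
          measurableSet_lt (by fun_prop) hf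
        rw [← lintegral_indicator hset_t, ← lintegral_const_mul _ (hF.indicator hset_t)]
        refine lintegral_congr fun x => ?_
        by_cases h : ENNReal.ofReal t < f x <;> simp [h, mul_comm]

lemma lintegral_rpow_le_of_mul_meas_lt_le {p : ℝ} (hp : 1 < p) (hf : Measurable f)
    (hF : Measurable F)
    (h : ∀ l, l ≠ ∞ → l * μ {x | l < F x} ≤ A * ∫⁻ x in {x | l < f x}, f x ∂μ) :
    ∫⁻ x, F x ^ p ∂μ ≤ ENNReal.ofReal (p / (p - 1)) * A * ∫⁻ x, f x ^ p ∂μ := by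
  have hp0 : 0 < p := one_pos.trans hp
  have hp1 : 0 < p - 1 := sub_pos.2 hp
  have hlevel (t : ℝ) (ht : t ∈ Ioi (0 : ℝ)) :
      ENNReal.ofReal (p * t ^ (p - 1)) * μ {x | ENNReal.ofReal t < F x} ≤
        ENNReal.ofReal (p / (p - 1)) * A * (ENNReal.ofReal ((p - 1) * t ^ (p - 1 - 1)) *
          ∫⁻ x in {x | ENNReal.ofReal t < f x}, f x ∂μ) := by
    rw [mem_Ioi] at ht
    calc ENNReal.ofReal (p * t ^ (p - 1)) * μ {x | ENNReal.ofReal t < F x}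
        = ENNReal.ofReal (p / (p - 1)) * ENNReal.ofReal ((p - 1) * t ^ (p - 1 - 1)) *
            (ENNReal.ofReal t * μ {x | ENNReal.ofReal t < F x}) := by
          rw [← mul_assoc, ← ENNReal.ofReal_mul (by positivity),
            ← ENNReal.ofReal_mul (by positivity), Real.rpow_sub_one ht.ne' (p - 1)]
          congr 2
          field_simp
      _ ≤ ENNReal.ofReal (p / (p - 1)) * ENNReal.ofReal ((p - 1) * t ^ (p - 1 - 1)) *
            (A * ∫⁻ x in {x | ENNReal.ofReal t < f x}, f x ∂μ) :=
          mul_le_mul_right (h _ ENNReal.ofReal_ne_top) _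
      _ = _ := by ring
  calc ∫⁻ x, F x ^ p ∂μ
      = ∫⁻ t : ℝ in Ioi 0, ENNReal.ofReal (p * t ^ (p - 1)) * μ {x | ENNReal.ofReal t < F x} := by
        simpa only [one_mul, setLIntegral_one] using
          lintegral_mul_rpow_eq (μ := μ) hp0 hF (measurable_const (a := 1))
    _ ≤ ENNReal.ofReal (p / (p - 1)) * A * ∫⁻ t : ℝ in Ioi 0,
          ENNReal.ofReal ((p - 1) * t ^ (p - 1 - 1)) *
            ∫⁻ x in {x | ENNReal.ofReal t < f x}, f x ∂μ := by
        rw [← lintegral_const_mul' _ _ (by finiteness)]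
        exact setLIntegral_mono' measurableSet_Ioi hlevel
    _ = ENNReal.ofReal (p / (p - 1)) * A * ∫⁻ x, f x ^ p ∂μ := by
        rw [← lintegral_mul_rpow_eq hp1 hf hf]
        congr! with x
        simpa only [ENNReal.rpow_one, add_sub_cancel] using
          (ENNReal.rpow_add_of_nonneg (x := f x) 1 (p - 1) zero_le_one hp1.le).symm

end LayerCake

section MaximalInequality

variable {X : Type*} [PseudoMetricSpace X] [ProperSpace X] [MeasurableSpace X]
  {μ : Measure X} [IsFiniteMeasureOnCompacts μ] {f : X → ℝ≥0∞} {A : NNReal}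

lemma lintegral_mul_le_mul_hlMaximal {k : X → ℝ≥0∞} {x : X} (hk : Measurable k)
    (hf : Measurable f) (hball : ∀ t, t ≠ 0 → ∃ r, {y | t < k y} = ball x r) :
    ∫⁻ y, k y * f y ∂μ ≤ (∫⁻ y, k y ∂μ) * hlMaximal μ f x := by
  have hlayer {g : X → ℝ≥0∞} (hg : Measurable g) : ∫⁻ y, k y * g y ∂μ =
      ∫⁻ t : ℝ in Ioi 0, ∫⁻ y in {y | ENNReal.ofReal t < k y}, g y ∂μ := by
    simpa [mul_comm] using lintegral_mul_rpow_eq (μ := μ) one_pos hk hg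
  have hlayer_one := hlayer (measurable_const (a := 1))
  simp only [mul_one, setLIntegral_one] at hlayer_one
  have hmeas : Measurable fun t : ℝ => μ {y | ENNReal.ofReal t < k y} :=
    Antitone.measurable fun s t hst => measure_mono fun y hy =>
      (ENNReal.ofReal_le_ofReal hst).trans_lt hy
  rw [hlayer hf, hlayer_one, ← lintegral_mul_const _ hmeas]
  refine setLIntegral_mono' measurableSet_Ioi fun t ht => ?_
  obtain ⟨r, hr⟩ := hball (ENNReal.ofReal t) (ENNReal.ofReal_pos.2 ht).ne'
  rw [hr]
  rcases le_or_gt r 0 with hr0 | hr0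
  · simp [ball_eq_empty.2 hr0]
  · exact setLIntegral_ball_le (mem_ball_self hr0)

variable [BorelSpace X]

theorem lintegral_hlMaximal_rpow_le
    (hA : ∀ (c : X) (r : ℝ), 0 < r → μ (closedBall c (5 * r)) ≤ A * μ (ball c r))
    {p : ℝ} (hp : 1 < p) (hf : Measurable f) :
    ∫⁻ x, hlMaximal μ f x ^ p ∂μ ≤
      ENNReal.ofReal (2 ^ p * (p / (p - 1))) * A * ∫⁻ x, f x ^ p ∂μ := by
  have hp0 : 0 < p := one_pos.trans hp
  have hhalf := lintegral_rpow_le_of_mul_meas_lt_le (F := fun x => hlMaximal μ f x / 2) hp hf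
    (measurable_hlMaximal.div_const 2) fun l hl => by
      simpa only [ENNReal.lt_div_iff_mul_lt (.inl two_ne_zero) (.inl ofNat_ne_top), mul_comm l 2]
        using mul_meas_two_mul_lt_hlMaximal_le hA hf hl
  calc ∫⁻ x, hlMaximal μ f x ^ p ∂μ
      = ENNReal.ofReal (2 ^ p) * ∫⁻ x, (hlMaximal μ f x / 2) ^ p ∂μ := by
        rw [← lintegral_const_mul' _ _ (by finiteness)]
        refine lintegral_congr fun x => ?_
        rw [← ENNReal.ofReal_rpow_of_pos two_pos, ENNReal.ofReal_ofNat,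
          ← ENNReal.mul_rpow_of_nonneg _ _ hp0.le, ENNReal.mul_div_cancel two_ne_zero ofNat_ne_top]
    _ ≤ ENNReal.ofReal (2 ^ p) * (ENNReal.ofReal (p / (p - 1)) * A * ∫⁻ x, f x ^ p ∂μ) := by
        gcongr
    _ = _ := by rw [ENNReal.ofReal_mul (by positivity)]; ring

end MaximalInequality

section Doubling

variable {E : Type*} [NormedAddCommGroup E] [NormedSpace ℝ E] [FiniteDimensional ℝ E]
  [MeasurableSpace E] [BorelSpace E] (μ : Measure E) [μ.IsAddHaarMeasure]

lemma addHaar_closedBall_five_mul_le (c : E) (r : ℝ) (hr : 0 < r) :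
    μ (closedBall c (5 * r)) ≤ (5 ^ Module.finrank ℝ E : NNReal) * μ (ball c r) := by
  rw [Measure.addHaar_closedBall μ c (by positivity), Measure.addHaar_ball_of_pos μ c hr,
    ← mul_assoc, mul_pow, ENNReal.ofReal_mul (by positivity), ENNReal.ofReal_pow (by norm_num)]
  simp

end Doubling

section AbelInversion

variable {a β T s t u : ℝ}

/-- The truncated power `t₊ ^ a`. Up to a constant, convolution with `t₊ ^ (β - 1)` is fractional
integration of order `β` on the line. -/
noncomputable def truncPow (a t : ℝ) : ℝ := (Ioi 0).indicator (· ^ a) t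

lemma truncPow_of_pos (ht : 0 < t) : truncPow a t = t ^ a := indicator_of_mem (mem_Ioi.2 ht) _

lemma truncPow_of_nonpos (ht : t ≤ 0) : truncPow a t = 0 := indicator_of_notMem (notMem_Ioi.2 ht) _

lemma truncPow_nonneg : 0 ≤ truncPow a t :=
  indicator_nonneg (fun _ hs => Real.rpow_nonneg (le_of_lt hs) _) t

@[fun_prop]
lemma measurable_truncPow : Measurable (truncPow a) :=
  Measurable.indicator (by fun_prop) measurableSet_Ioi

lemma integral_truncPow_mul_truncPow_sub (hβ0 : 0 < β) (hβ1 : β < 1) (hu : 0 < u) :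
    ∫ s, truncPow (-β) s * truncPow (β - 1) (u - s) = Real.Gamma (1 - β) * Real.Gamma β := by
  have hind : (fun s => truncPow (-β) s * truncPow (β - 1) (u - s)) =
      (Ioo 0 u).indicator fun s => s ^ (-β) * (u - s) ^ (β - 1) := by
    ext s
    rcases le_or_gt s 0 with hs | hs
    · simp [truncPow_of_nonpos hs, hs.not_gt]
    rcases le_or_gt u s with hus | hus
    · simp [truncPow_of_nonpos (sub_nonpos.2 hus), hus.not_gt]
    · simp [truncPow_of_pos hs, truncPow_of_pos (sub_pos.2 hus), hs, hus]
  rw [hind, integral_indicator measurableSet_Ioo, ← integral_Ioc_eq_integral_Ioo,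
    ← intervalIntegral.integral_of_le hu.le]
  have hcast : ∫ s in 0..u, ((s ^ (-β) * (u - s) ^ (β - 1) : ℝ) : ℂ) =
      ∫ s in 0..u, (s : ℂ) ^ (((1 - β : ℝ) : ℂ) - 1) * ((u : ℂ) - s) ^ ((β : ℂ) - 1) :=
    intervalIntegral.integral_congr fun s hs => by
      rw [uIcc_of_le hu.le] at hs
      push_cast [Complex.ofReal_cpow hs.1, Complex.ofReal_cpow (sub_nonneg.2 hs.2)]
      ring_nf
  rw [intervalIntegral.integral_ofReal, Complex.betaIntegral_scaled _ _ hu,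
    Complex.betaIntegral_eq_Gamma_mul_div _ _ (by simpa) (by simpa),
    Complex.ofReal_sub, Complex.ofReal_one, sub_add_cancel, sub_self, Complex.cpow_zero, one_mul,
    Complex.Gamma_one, div_one, ← Complex.ofReal_one, ← Complex.ofReal_sub, Complex.Gamma_ofReal,
    Complex.Gamma_ofReal] at hcast
  exact_mod_cast hcast

lemma truncPow_mul_truncPow_sub_of_nonpos (hu : u ≤ 0) (s : ℝ) :
    truncPow a s * truncPow β (u - s) = 0 := by
  rcases le_or_gt s 0 with hs | hs
  · rw [truncPow_of_nonpos hs, zero_mul]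
  · rw [truncPow_of_nonpos (t := u - s) (by linarith), mul_zero]

lemma integrable_truncPow_mul_truncPow_sub (hβ0 : 0 < β) (hβ1 : β < 1) (u : ℝ) :
    Integrable fun s => truncPow (-β) s * truncPow (β - 1) (u - s) := by
  rcases le_or_gt u 0 with hu | hu
  · simp [truncPow_mul_truncPow_sub_of_nonpos hu]
  · refine .of_integral_ne_zero ?_
    rw [integral_truncPow_mul_truncPow_sub hβ0 hβ1 hu]
    exact (mul_pos (Real.Gamma_pos_of_pos (sub_pos.2 hβ1)) (Real.Gamma_pos_of_pos hβ0)).ne'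

/-- The density whose fractional integral of order `β` is a multiple of the indicator of `(0, T]`;
integrating against it inverts Abel's transform. -/
noncomputable def abelKernel (β T s : ℝ) : ℝ := truncPow (-β) s - truncPow (-β) (s - T)

@[fun_prop]
lemma measurable_abelKernel : Measurable (abelKernel β T) := by
  unfold abelKernel; fun_prop

lemma abelKernel_of_nonpos (hT : 0 ≤ T) (hs : s ≤ 0) : abelKernel β T s = 0 := by
  rw [abelKernel, truncPow_of_nonpos hs, truncPow_of_nonpos (show s - T ≤ 0 by linarith), sub_zero]

lemma integral_abelKernel_mul_truncPow (hβ0 : 0 < β) (hβ1 : β < 1) (hT : 0 < T) (u : ℝ) :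
    ∫ s, abelKernel β T s * truncPow (β - 1) (u - s) =
      (Ioc 0 T).indicator (fun _ => Real.Gamma (1 - β) * Real.Gamma β) u := by
  have hshift (s : ℝ) : truncPow (-β) (s - T) * truncPow (β - 1) (u - s) =
      truncPow (-β) (s - T) * truncPow (β - 1) (u - T - (s - T)) := by rw [sub_sub_sub_cancel_right]
  simp_rw [abelKernel, sub_mul, hshift]
  rw [integral_sub (integrable_truncPow_mul_truncPow_sub hβ0 hβ1 u)
      ((integrable_truncPow_mul_truncPow_sub hβ0 hβ1 (u - T)).comp_sub_right T),
    integral_sub_right_eq_self (fun s => truncPow (-β) s * truncPow (β - 1) (u - T - s))]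
  rcases le_or_gt u 0 with hu | hu
  · simp [truncPow_mul_truncPow_sub_of_nonpos hu,
      truncPow_mul_truncPow_sub_of_nonpos (show u - T ≤ 0 by linarith), hu.not_gt]
  rw [integral_truncPow_mul_truncPow_sub hβ0 hβ1 hu]
  rcases le_or_gt u T with huT | huT
  · simp [truncPow_mul_truncPow_sub_of_nonpos (sub_nonpos.2 huT), hu, huT]
  · simp [integral_truncPow_mul_truncPow_sub hβ0 hβ1 (sub_pos.2 huT), huT.not_ge]

lemma setLIntegral_Ioc_zero_enorm_abelKernel (hβ1 : β < 1) (hT : 0 < T) :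
    ∫⁻ s in Ioc 0 T, ‖abelKernel β T s‖ₑ = ENNReal.ofReal (T ^ (1 - β) / (1 - β)) := by
  have hval (s : ℝ) (hs : s ∈ Ioc 0 T) : ‖abelKernel β T s‖ₑ = ENNReal.ofReal (s ^ (-β)) := by
    rw [abelKernel, truncPow_of_pos hs.1, truncPow_of_nonpos (sub_nonpos.2 hs.2), sub_zero,
      Real.enorm_of_nonneg (Real.rpow_nonneg hs.1.le _)]
  have hint : IntervalIntegrable (fun s : ℝ => s ^ (-β)) volume 0 T :=
    intervalIntegral.intervalIntegrable_rpow' (by linarith)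
  rw [setLIntegral_congr_fun measurableSet_Ioc hval, ← ofReal_integral_eq_lintegral_ofReal
    ((intervalIntegrable_iff_integrableOn_Ioc_of_le hT.le).1 hint),
    ← intervalIntegral.integral_of_le hT.le, integral_rpow (.inl (by linarith)), neg_add_eq_sub,
    Real.zero_rpow (sub_pos.2 hβ1).ne', sub_zero]
  filter_upwards [ae_restrict_mem measurableSet_Ioc] with s hs using Real.rpow_nonneg hs.1.le _

lemma setLIntegral_Ioc_enorm_abelKernel_le (hβ0 : 0 ≤ β) (hβ1 : β < 1) (hT : 0 < T) {R : ℝ}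
    (hR : T ≤ R) :
    ∫⁻ s in Ioc T R, ‖abelKernel β T s‖ₑ ≤ ENNReal.ofReal (T ^ (1 - β) / (1 - β)) := by
  have hnonneg (s : ℝ) (hs : s ∈ Ioc T R) : 0 ≤ (s - T) ^ (-β) - s ^ (-β) :=
    sub_nonneg.2 (Real.rpow_le_rpow_of_nonpos (sub_pos.2 hs.1) (by linarith) (neg_nonpos.2 hβ0))
  have hval (s : ℝ) (hs : s ∈ Ioc T R) :
      ‖abelKernel β T s‖ₑ = ENNReal.ofReal ((s - T) ^ (-β) - s ^ (-β)) := by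
    rw [abelKernel, truncPow_of_pos (hT.trans hs.1), truncPow_of_pos (sub_pos.2 hs.1),
      enorm_sub_rev, Real.enorm_of_nonneg (hnonneg s hs)]
  have hint (a b : ℝ) : IntervalIntegrable (fun s : ℝ => s ^ (-β)) volume a b :=
    intervalIntegral.intervalIntegrable_rpow' (by linarith)
  have hint_shift : IntervalIntegrable (fun s : ℝ => (s - T) ^ (-β)) volume T R := by
    simpa using (hint 0 (R - T)).comp_sub_right T
  rw [setLIntegral_congr_fun measurableSet_Ioc hval, ← ofReal_integral_eq_lintegral_ofReal
    ((intervalIntegrable_iff_integrableOn_Ioc_of_le hR).1 (hint_shift.sub (hint T R)))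
    ((ae_restrict_mem measurableSet_Ioc).mono hnonneg), ← intervalIntegral.integral_of_le hR,
    intervalIntegral.integral_sub hint_shift (hint T R),
    intervalIntegral.integral_comp_sub_right (fun s => s ^ (-β)), sub_self,
    integral_rpow (.inl (by linarith)), integral_rpow (.inl (by linarith)), neg_add_eq_sub,
    Real.zero_rpow (sub_pos.2 hβ1).ne', sub_zero, ← sub_div]
  have hmono : (R - T) ^ (1 - β) ≤ R ^ (1 - β) :=
    Real.rpow_le_rpow (sub_nonneg.2 hR) (by linarith) (by linarith)
  have hβ : 0 < 1 - β := sub_pos.2 hβ1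
  exact ENNReal.ofReal_le_ofReal (div_le_div_of_nonneg_right (by linarith) hβ.le)

lemma lintegral_enorm_abelKernel_le (hβ0 : 0 ≤ β) (hβ1 : β < 1) (hT : 0 < T) :
    ∫⁻ s, ‖abelKernel β T s‖ₑ ≤ ENNReal.ofReal (2 * (T ^ (1 - β) / (1 - β))) := by
  have hsupp : (Function.support fun s => ‖abelKernel β T s‖ₑ) ⊆
      Ioc 0 T ∪ ⋃ n : ℕ, Ioc T (T + n) := fun s hs => by
    have hs0 : 0 < s := by
      by_contra! h
      exact hs (by simp [abelKernel_of_nonpos hT.le h])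
    refine (le_or_gt s T).imp (fun h => ⟨hs0, h⟩) fun h => mem_iUnion.2 ?_
    obtain ⟨n, hn⟩ := exists_nat_ge (s - T)
    exact ⟨n, h, by linarith⟩
  have hmono : Monotone fun n : ℕ => Ioc T (T + n) := fun m n hmn =>
    Ioc_subset_Ioc_right (by gcongr)
  rw [← setLIntegral_eq_of_support_subset hsupp, two_mul]
  calc _ ≤ (∫⁻ s in Ioc 0 T, ‖abelKernel β T s‖ₑ) +
        ⨆ n : ℕ, ∫⁻ s in Ioc T (T + n), ‖abelKernel β T s‖ₑ := by
        rw [← setLIntegral_iUnion_of_directed _ hmono.directed_le]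
        exact lintegral_union_le _ _ _
    _ ≤ _ := by
        have hbound : 0 ≤ T ^ (1 - β) / (1 - β) := div_nonneg (by positivity) (sub_pos.2 hβ1).le
        rw [ENNReal.ofReal_add hbound hbound]
        exact add_le_add (setLIntegral_Ioc_zero_enorm_abelKernel hβ1 hT).le
          (iSup_le fun n => setLIntegral_Ioc_enorm_abelKernel_le hβ0 hβ1 hT (by simp))

end AbelInversion

section HeatKernel

open Module

lemma lintegral_ofReal_eq_ofReal_integral {X : Type*} [MeasurableSpace X] {μ : Measure X}
    {f : X → ℝ} (hf : 0 ≤ᵐ[μ] f) (h : ∫ x, f x ∂μ ≠ 0) :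
    ∫⁻ x, ENNReal.ofReal (f x) ∂μ = ENNReal.ofReal (∫ x, f x ∂μ) :=
  (ofReal_integral_eq_lintegral_ofReal (.of_integral_ne_zero h) hf).symm

variable {E : Type*} [NormedAddCommGroup E] [InnerProductSpace ℝ E]

/-- The Gauss–Weierstrass kernel, in the normalisation
`(π s) ^ (-d / 2) * exp (-‖x‖² / s)` in which the heat flow at time `t` is convolution with
`heatKernel (4 * t)`. -/
noncomputable def heatKernel (s : ℝ) (x : E) : ℝ :=
  (Real.pi * s) ^ (-(finrank ℝ E / 2) : ℝ) * Real.exp (-(‖x‖ ^ 2 / s))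

variable (E) in
/-- The constant `c` in the subordination formula
`∫ u₊ ^ (β - 1) * heatKernel u x du = c * ‖x‖ ^ (-γ)`, `2 * β = d - γ`. -/
noncomputable def subordinationConst (γ : ℝ) : ℝ :=
  Real.pi ^ (-(finrank ℝ E / 2) : ℝ) * Real.Gamma (γ / 2)

variable {s t β γ : ℝ} {x : E}

lemma subordinationConst_pos (hγ : 0 < γ) : 0 < subordinationConst E γ :=
  mul_pos (by positivity) (Real.Gamma_pos_of_pos (by positivity))

lemma heatKernel_pos (hs : 0 < s) (x : E) : 0 < heatKernel s x := by
  unfold heatKernel; positivity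

lemma enorm_heatKernel (hs : 0 < s) (x : E) : ‖heatKernel s x‖ₑ = ENNReal.ofReal (heatKernel s x) :=
  Real.enorm_of_nonneg (heatKernel_pos hs x).le

lemma heatKernel_mul_heatKernel (hs : 0 < s) (ht : 0 < t) (x z : E) :
    heatKernel s (x - z) * heatKernel t z =
      heatKernel (s + t) x * heatKernel (s * t / (s + t)) (z - (t / (s + t)) • x) := by
  have hpre : Real.pi * s * (Real.pi * t) =
      Real.pi * (s + t) * (Real.pi * (s * t / (s + t))) := by field_simp
  have hexp : ‖x - z‖ ^ 2 / s + ‖z‖ ^ 2 / t =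
      ‖x‖ ^ 2 / (s + t) + ‖z - (t / (s + t)) • x‖ ^ 2 / (s * t / (s + t)) := by
    rw [norm_sub_sq_real, norm_sub_sq_real, norm_smul, inner_smul_right, real_inner_comm,
      Real.norm_of_nonneg (by positivity)]
    field_simp
    ring
  unfold heatKernel
  rw [mul_mul_mul_comm, mul_mul_mul_comm ((Real.pi * (s + t)) ^ _),
    ← Real.mul_rpow (by positivity) (by positivity),
    ← Real.mul_rpow (by positivity) (by positivity), ← Real.exp_add, ← Real.exp_add, hpre,
    ← neg_add, ← neg_add, hexp]

lemma heatKernel_mul_norm_le (hs : 0 < s) (x : E) :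
    heatKernel s x * ‖x‖ ≤ 2 ^ (finrank ℝ E / 2 : ℝ) * √s * heatKernel (2 * s) x := by
  set ρ := ‖x‖ / √s
  have hx : ‖x‖ = √s * ρ := (mul_div_cancel₀ _ (Real.sqrt_pos.2 hs).ne').symm
  have hρ : ρ ≤ Real.exp (ρ ^ 2 / 2) := by
    linarith [Real.add_one_le_exp (ρ ^ 2 / 2), sq_nonneg (ρ - 1)]
  have hpre : (2 : ℝ) ^ (finrank ℝ E / 2 : ℝ) * (Real.pi * (2 * s)) ^ (-(finrank ℝ E / 2) : ℝ) =
      (Real.pi * s) ^ (-(finrank ℝ E / 2) : ℝ) := by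
    rw [mul_left_comm, Real.mul_rpow zero_le_two (by positivity), ← mul_assoc,
      ← Real.rpow_add two_pos, add_neg_cancel, Real.rpow_zero, one_mul]
  calc heatKernel s x * ‖x‖
      = (Real.pi * s) ^ (-(finrank ℝ E / 2) : ℝ) * √s * (Real.exp (-ρ ^ 2) * ρ) := by
        rw [heatKernel, hx, mul_pow, Real.sq_sqrt hs.le, mul_div_cancel_left₀ _ hs.ne']; ring
    _ ≤ (Real.pi * s) ^ (-(finrank ℝ E / 2) : ℝ) * √s *
          (Real.exp (-ρ ^ 2) * Real.exp (ρ ^ 2 / 2)) := by gcongr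
    _ = 2 ^ (finrank ℝ E / 2 : ℝ) * √s * heatKernel (2 * s) x := by
        rw [← Real.exp_add, ← hpre, heatKernel, hx, mul_pow, Real.sq_sqrt hs.le,
          show s * ρ ^ 2 / (2 * s) = ρ ^ 2 / 2 by field_simp]
        ring_nf

lemma superlevel_heatKernel_eq_ball (hs : 0 < s) (x : E) {t : ℝ≥0∞} (ht : t ≠ 0) :
    ∃ r, {y | t < ‖heatKernel s (x - y)‖ₑ} = ball x r := by
  rcases eq_or_ne t ∞ with rfl | ht_top
  · exact ⟨0, by simp⟩
  set c : ℝ := (Real.pi * s) ^ (-(finrank ℝ E / 2) : ℝ)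
  have hc : 0 < c := by positivity
  have ha : 0 < t.toReal := ENNReal.toReal_pos ht ht_top
  refine ⟨√(-(s * Real.log (t.toReal / c))), ?_⟩
  ext y
  rw [mem_ofPred_eq, enorm_heatKernel hs, ENNReal.lt_ofReal_iff_toReal_lt ht_top, mem_ball,
    dist_comm, dist_eq_norm, Real.lt_sqrt (norm_nonneg _), heatKernel, ← div_lt_iff₀' hc,
    ← Real.log_lt_iff_lt_exp (by positivity), lt_neg, div_lt_iff₀' hs, mul_neg]

lemma lintegral_truncPow_mul_heatKernel (hγ : 0 < γ) (hβ : 2 * β = finrank ℝ E - γ)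
    (hx : x ≠ 0) :
    ∫⁻ u, ‖truncPow (β - 1) u‖ₑ * ‖heatKernel u x‖ₑ =
      ‖subordinationConst E γ‖ₑ * ‖‖x‖ ^ (-γ)‖ₑ := by
  have hnorm : 0 < ‖x‖ := norm_pos_iff.2 hx
  have hc := subordinationConst_pos (E := E) hγ
  have hinv : ∀ σ ∈ Ioi (0 : ℝ),
      (|(-1 : ℝ)| * σ ^ (-1 - 1 : ℝ)) • ((σ ^ (-1 : ℝ)) ^ (β - 1) * heatKernel (σ ^ (-1 : ℝ)) x) =
      Real.pi ^ (-(finrank ℝ E / 2) : ℝ) *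
        (σ ^ (γ / 2 - 1) * Real.exp (-(‖x‖ ^ 2 * σ))) := fun σ hσ => by
    rw [mem_Ioi] at hσ
    rw [heatKernel, Real.mul_rpow (by positivity) (by positivity), ← Real.rpow_mul hσ.le,
      ← Real.rpow_mul hσ.le, Real.rpow_neg_one, div_inv_eq_mul, abs_neg, abs_one, one_mul,
      smul_eq_mul, show γ / 2 - 1 = (-1 - 1) + (-1 * (β - 1) + -1 * -(finrank ℝ E / 2)) by linarith,
      Real.rpow_add hσ, Real.rpow_add hσ]
    ring
  have hint : ∫ u in Ioi (0 : ℝ), u ^ (β - 1) * heatKernel u x =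
      subordinationConst E γ * ‖x‖ ^ (-γ) := by
    rw [subordinationConst, ← integral_comp_rpow_Ioi _ (neg_ne_zero.2 one_ne_zero),
      setIntegral_congr_fun measurableSet_Ioi hinv, integral_const_mul,
      Real.integral_rpow_mul_exp_neg_mul_Ioi (by positivity) (by positivity), one_div,
      ← Real.rpow_natCast, ← Real.rpow_neg hnorm.le, ← Real.rpow_mul hnorm.le]
    push_cast
    ring_nf
  have hind (u : ℝ) : ‖truncPow (β - 1) u‖ₑ * ‖heatKernel u x‖ₑ =
      (Ioi 0).indicator (fun u => ENNReal.ofReal (u ^ (β - 1) * heatKernel u x)) u := by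
    rcases le_or_gt u 0 with hu | hu
    · simp [truncPow_of_nonpos hu, hu]
    · rw [indicator_of_mem (mem_Ioi.2 hu), truncPow_of_pos hu, ← enorm_mul,
        Real.enorm_of_nonneg (mul_nonneg (by positivity) (heatKernel_pos hu x).le)]
  simp_rw [hind]
  rw [lintegral_indicator measurableSet_Ioi,
    lintegral_ofReal_eq_ofReal_integral _ (by rw [hint]; positivity), hint, ← enorm_mul,
    Real.enorm_of_nonneg (by positivity)]
  filter_upwards [ae_restrict_mem measurableSet_Ioi] with u hu
  exact mul_nonneg (Real.rpow_nonneg (le_of_lt hu) _) (heatKernel_pos hu x).le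

variable [MeasurableSpace E] [BorelSpace E]

@[fun_prop]
lemma measurable_heatKernel {X : Type*} [MeasurableSpace X] {a : X → ℝ} {b : X → E}
    (ha : Measurable a) (hb : Measurable b) : Measurable fun y => heatKernel (a y) (b y) := by
  unfold heatKernel; fun_prop

variable [FiniteDimensional ℝ E]

lemma integral_heatKernel (hs : 0 < s) : ∫ x : E, heatKernel s x = 1 := by
  simp_rw [heatKernel, integral_const_mul, div_eq_inv_mul (_ ^ _) s, ← neg_mul s⁻¹]
  rw [GaussianFourier.integral_rexp_neg_mul_sq_norm (inv_pos.2 hs), div_inv_eq_mul,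
    ← Real.rpow_add (by positivity), neg_add_cancel, Real.rpow_zero]

lemma lintegral_heatKernel (hs : 0 < s) : ∫⁻ x : E, ‖heatKernel s x‖ₑ = 1 := by
  have hint := integral_heatKernel (E := E) hs
  simp_rw [enorm_heatKernel hs]
  rw [lintegral_ofReal_eq_ofReal_integral (.of_forall fun x => (heatKernel_pos hs x).le)
    (by simp [hint]), hint, ENNReal.ofReal_one]

lemma lintegral_heatKernel_mul_heatKernel (hs : 0 < s) (ht : 0 < t) (x : E) :
    ∫⁻ z, ‖heatKernel s (x - z)‖ₑ * ‖heatKernel t z‖ₑ = ‖heatKernel (s + t) x‖ₑ := by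
  simp_rw [← enorm_mul, heatKernel_mul_heatKernel hs ht, enorm_mul]
  rw [lintegral_const_mul' _ _ enorm_ne_top,
    lintegral_sub_right_eq_self (fun z => ‖heatKernel (s * t / (s + t)) z‖ₑ),
    lintegral_heatKernel (by positivity), mul_one]

lemma lintegral_heatKernel_mul_le_hlMaximal (hs : 0 < s) (x : E) {f : E → ℝ≥0∞}
    (hf : Measurable f) :
    ∫⁻ y, ‖heatKernel s (x - y)‖ₑ * f y ≤ hlMaximal volume f x := by
  have := lintegral_mul_le_mul_hlMaximal (by fun_prop) hf (μ := volume) fun _ =>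
    superlevel_heatKernel_eq_ball hs x
  rwa [lintegral_sub_left_eq_self (fun z => ‖heatKernel s z‖ₑ),
    lintegral_heatKernel hs, one_mul] at this

lemma lintegral_heatKernel_mul_norm_rpow [Nontrivial E] (hγ : 0 < γ)
    (hβ : 2 * β = finrank ℝ E - γ) (hs : 0 < s) (x : E) :
    ‖subordinationConst E γ‖ₑ * ∫⁻ z, ‖heatKernel s (x - z)‖ₑ * ‖‖z‖ ^ (-γ)‖ₑ =
      ∫⁻ u, ‖truncPow (β - 1) (u - s)‖ₑ * ‖heatKernel u x‖ₑ := by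
  calc _ = ∫⁻ z : E, ∫⁻ τ : ℝ, ‖heatKernel s (x - z)‖ₑ *
          (‖truncPow (β - 1) τ‖ₑ * ‖heatKernel τ z‖ₑ) := by
        rw [← lintegral_const_mul' _ _ enorm_ne_top]
        refine lintegral_congr_ae ?_
        filter_upwards [compl_mem_ae_iff.2 (measure_singleton (0 : E))] with z hz
        rw [lintegral_const_mul' _ _ enorm_ne_top, mul_left_comm,
          ← lintegral_truncPow_mul_heatKernel hγ hβ hz]
    _ = ∫⁻ τ, ‖truncPow (β - 1) τ‖ₑ *
          ∫⁻ z : E, ‖heatKernel s (x - z)‖ₑ * ‖heatKernel τ z‖ₑ := by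
        rw [lintegral_lintegral_swap (by fun_prop)]
        refine lintegral_congr fun τ => ?_
        rw [← lintegral_const_mul' _ _ enorm_ne_top]
        simp_rw [mul_left_comm]
    _ = ∫⁻ τ, ‖truncPow (β - 1) (s + τ - s)‖ₑ * ‖heatKernel (s + τ) x‖ₑ := by
        refine lintegral_congr fun τ => ?_
        rw [add_sub_cancel_left]
        rcases le_or_gt τ 0 with hτ | hτ
        · simp [truncPow_of_nonpos hτ]
        · rw [lintegral_heatKernel_mul_heatKernel hs hτ]
    _ = _ := lintegral_add_left_eq_self
        (fun u => ‖truncPow (β - 1) (u - s)‖ₑ * ‖heatKernel u x‖ₑ) s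

end HeatKernel

section Fubini

variable {X Y F : Type*} [MeasurableSpace X] [MeasurableSpace Y] {μ : Measure X} {ν : Measure Y}
  [SFinite μ] [SFinite ν] [NormedAddCommGroup F] [NormedSpace ℝ F] [CompleteSpace F]

lemma integral_smul_integral_smul {A : X → ℝ} {L : X → Y → ℝ} {v : Y → F} (hA : Measurable A)
    (hL : Measurable L.uncurry) (hv : StronglyMeasurable v)
    (hfin : ∫⁻ a, ‖A a‖ₑ * ∫⁻ b, ‖L a b‖ₑ * ‖v b‖ₑ ∂ν ∂μ ≠ ∞) :
    ∫ a, A a • ∫ b, L a b • v b ∂ν ∂μ = ∫ b, (∫ a, A a * L a b ∂μ) • v b ∂ν := by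
  have hmeas : StronglyMeasurable fun z : X × Y => (A z.1 * L z.1 z.2) • v z.2 :=
    ((hA.comp measurable_fst).mul hL).stronglyMeasurable.smul (hv.comp_measurable measurable_snd)
  have hint : Integrable (Function.uncurry fun a b => (A a * L a b) • v b) (μ.prod ν) := by
    refine ⟨hmeas.aestronglyMeasurable, ?_⟩
    rw [hasFiniteIntegral_iff_enorm]
    refine (lintegral_prod _ hmeas.enorm.aemeasurable).trans_lt ?_
    simp_rw [enorm_smul, enorm_mul, mul_assoc, lintegral_const_mul' _ _ enorm_ne_top]
    exact hfin.lt_top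
  calc _ = ∫ a, ∫ b, (A a * L a b) • v b ∂ν ∂μ := by simp_rw [← integral_smul, smul_smul]
    _ = ∫ b, ∫ a, (A a * L a b) • v b ∂μ ∂ν := integral_integral_swap hint
    _ = _ := by simp_rw [integral_smul_const]

end Fubini

section RieszPotential

open Module

variable {E : Type*} [NormedAddCommGroup E] [InnerProductSpace ℝ E] [FiniteDimensional ℝ E]
  [MeasurableSpace E] [BorelSpace E] {β γ s T : ℝ}

lemma lintegral_heatKernel_mul_norm_sub_rpow [Nontrivial E] (hγ : 0 < γ)
    (hβ : 2 * β = finrank ℝ E - γ) (hs : 0 < s) (x y : E) :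
    ‖subordinationConst E γ‖ₑ * ∫⁻ z, ‖heatKernel s (x - z)‖ₑ * ‖‖z - y‖ ^ (-γ)‖ₑ =
      ∫⁻ u, ‖truncPow (β - 1) (u - s)‖ₑ * ‖heatKernel u (x - y)‖ₑ := by
  rw [← lintegral_heatKernel_mul_norm_rpow hγ hβ hs,
    ← lintegral_add_right_eq_self (fun z => ‖heatKernel s (x - z)‖ₑ * ‖‖z - y‖ ^ (-γ)‖ₑ) y]
  simp only [sub_add_eq_sub_sub_swap, add_sub_cancel_right]

lemma integral_heatKernel_mul_norm_sub_rpow [Nontrivial E] (hγ : 0 < γ)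
    (hβ : 2 * β = finrank ℝ E - γ) (hs : 0 < s) (x y : E) :
    subordinationConst E γ * ∫ z, heatKernel s (x - z) * ‖z - y‖ ^ (-γ) =
      ∫ u, truncPow (β - 1) (u - s) * heatKernel u (x - y) := by
  have hz (z : E) : heatKernel s (x - z) * ‖z - y‖ ^ (-γ) =
      ‖heatKernel s (x - z) * ‖z - y‖ ^ (-γ)‖ :=
    (Real.norm_of_nonneg (mul_nonneg (heatKernel_pos hs _).le (by positivity))).symm
  have hu (u : ℝ) : truncPow (β - 1) (u - s) * heatKernel u (x - y) =
      ‖truncPow (β - 1) (u - s) * heatKernel u (x - y)‖ := by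
    rcases le_or_gt u s with hus | hsu
    · simp [truncPow_of_nonpos (sub_nonpos.2 hus)]
    · exact (Real.norm_of_nonneg
        (mul_nonneg truncPow_nonneg (heatKernel_pos (hs.trans hsu) _).le)).symm
  rw [integral_congr_ae (.of_forall hz), integral_congr_ae (.of_forall hu),
    integral_norm_eq_lintegral_enorm (by fun_prop),
    integral_norm_eq_lintegral_enorm (by fun_prop),
    ← Real.norm_of_nonneg (subordinationConst_pos hγ).le, ← toReal_enorm, ← ENNReal.toReal_mul]
  simp_rw [enorm_mul, lintegral_heatKernel_mul_norm_sub_rpow hγ hβ hs]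

lemma lintegral_truncPow_mul_lintegral_heatKernel_mul [Nontrivial E] (hγ : 0 < γ)
    (hβ : 2 * β = finrank ℝ E - γ) (hs : 0 < s) (x : E) {f : E → ℝ≥0∞} (hf : Measurable f) :
    ∫⁻ u, ‖truncPow (β - 1) (u - s)‖ₑ * ∫⁻ y, ‖heatKernel u (x - y)‖ₑ * f y =
      ‖subordinationConst E γ‖ₑ *
        ∫⁻ z, ‖heatKernel s (x - z)‖ₑ * ∫⁻ y, ‖‖z - y‖ ^ (-γ)‖ₑ * f y := by
  simp_rw [← lintegral_const_mul' _ _ enorm_ne_top]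
  rw [lintegral_lintegral_swap (by fun_prop)]
  conv_rhs => rw [lintegral_lintegral_swap (by fun_prop)]
  refine lintegral_congr fun y => ?_
  simp_rw [← mul_assoc]
  rw [lintegral_mul_const _ (by fun_prop), lintegral_mul_const _ (by fun_prop),
    ← lintegral_heatKernel_mul_norm_sub_rpow hγ hβ hs, ← lintegral_const_mul' _ _ enorm_ne_top]
  simp_rw [mul_assoc]

lemma lintegral_heatKernel_mul_le_of_le (hs : 0 < s) {f : E → ℝ≥0∞} {B : ℝ≥0∞}
    (hB : ∀ z, f z ≤ B) (x : E) : ∫⁻ z, ‖heatKernel s (x - z)‖ₑ * f z ≤ B :=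
  calc _ ≤ ∫⁻ z, ‖heatKernel s (x - z)‖ₑ * B := by gcongr with z; exact hB z
    _ = B := by
      rw [lintegral_mul_const _ (by fun_prop),
        lintegral_sub_left_eq_self (fun z => ‖heatKernel s z‖ₑ), lintegral_heatKernel hs, one_mul]

variable {F : Type*} [NormedAddCommGroup F] [NormedSpace ℝ F]

/-- The Riesz-type convolution `‖·‖ ^ (-γ) ∗ v`, a multiple of `(-Δ) ^ (-(d - γ) / 2) v` when
`0 < γ < d`. -/
noncomputable def rieszPotential (γ : ℝ) (v : E → F) (x : E) : F := ∫ y, ‖x - y‖ ^ (-γ) • v y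

/-- The heat flow `exp ((s / 4) Δ) v`, for `0 < s`. -/
noncomputable def heatFlow (s : ℝ) (v : E → F) (x : E) : F := ∫ y, heatKernel s (x - y) • v y

variable {v : E → F} {B : ℝ≥0∞}

lemma enorm_heatFlow_le (s : ℝ) (v : E → F) (x : E) :
    ‖heatFlow s v x‖ₑ ≤ ∫⁻ y, ‖heatKernel s (x - y)‖ₑ * ‖v y‖ₑ :=
  (enorm_integral_le_lintegral_enorm _).trans_eq (by simp_rw [enorm_smul])

lemma enorm_rieszPotential_le (γ : ℝ) (v : E → F) (x : E) :
    ‖rieszPotential γ v x‖ₑ ≤ ∫⁻ y, ‖‖x - y‖ ^ (-γ)‖ₑ * ‖v y‖ₑ :=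
  (enorm_integral_le_lintegral_enorm _).trans_eq (by simp_rw [enorm_smul])

lemma heatFlow_rieszPotential [Nontrivial E] [CompleteSpace F] (hγ : 0 < γ)
    (hβ : 2 * β = finrank ℝ E - γ) (hs : 0 < s) (hv : StronglyMeasurable v)
    (hB : ∀ z, ∫⁻ y, ‖‖z - y‖ ^ (-γ)‖ₑ * ‖v y‖ₑ ≤ B) (hB_top : B ≠ ∞) (x : E) :
    subordinationConst E γ • heatFlow s (rieszPotential γ v) x =
      ∫ u, truncPow (β - 1) (u - s) • heatFlow u v x := by
  have hfin := ne_top_of_le_ne_top hB_top (lintegral_heatKernel_mul_le_of_le hs hB x)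
  unfold heatFlow rieszPotential
  rw [integral_smul_integral_smul (by fun_prop) (by fun_prop) hv hfin,
    integral_smul_integral_smul (by fun_prop) (by fun_prop) hv, ← integral_smul]
  · simp_rw [smul_smul, integral_heatKernel_mul_norm_sub_rpow hγ hβ hs]
  · rw [lintegral_truncPow_mul_lintegral_heatKernel_mul hγ hβ hs x hv.enorm]
    exact mul_ne_top enorm_ne_top hfin

lemma stronglyMeasurable_heatFlow (hv : StronglyMeasurable v) (x : E) :
    StronglyMeasurable fun s => heatFlow s v x :=
  StronglyMeasurable.integral_prod_right'
    (f := fun p : ℝ × E => heatKernel p.1 (x - p.2) • v p.2)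
    ((show Measurable fun p : ℝ × E => heatKernel p.1 (x - p.2) by fun_prop).stronglyMeasurable.smul
      (hv.comp_measurable measurable_snd))

lemma stronglyMeasurable_rieszPotential (hv : StronglyMeasurable v) :
    StronglyMeasurable (rieszPotential γ v) :=
  StronglyMeasurable.integral_prod_right'
    (f := fun p : E × E => ‖p.1 - p.2‖ ^ (-γ) • v p.2)
    ((show Measurable fun p : E × E => ‖p.1 - p.2‖ ^ (-γ) by fun_prop).stronglyMeasurable.smul
      (hv.comp_measurable measurable_snd))

lemma lintegral_abelKernel_mul_lintegral_truncPow_mul_heatFlow_ne_top [Nontrivial E] (hγ : 0 < γ)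
    (hβ : 2 * β = finrank ℝ E - γ) (hβ0 : 0 ≤ β) (hβ1 : β < 1) (hT : 0 < T)
    (hv : StronglyMeasurable v) (hB : ∀ z, ∫⁻ y, ‖‖z - y‖ ^ (-γ)‖ₑ * ‖v y‖ₑ ≤ B)
    (hB_top : B ≠ ∞) (x : E) :
    ∫⁻ s, ‖abelKernel β T s‖ₑ *
      ∫⁻ u, ‖truncPow (β - 1) (u - s)‖ₑ * ‖heatFlow u v x‖ₑ ≠ ∞ := by
  refine ne_top_of_le_ne_top (b := ∫⁻ s, ‖abelKernel β T s‖ₑ *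
    (‖subordinationConst E γ‖ₑ * B)) ?_ (lintegral_mono fun s => ?_)
  · rw [lintegral_mul_const _ (by fun_prop)]
    exact mul_ne_top (ne_top_of_le_ne_top ofReal_ne_top
      (lintegral_enorm_abelKernel_le hβ0 hβ1 hT)) (mul_ne_top enorm_ne_top hB_top)
  rcases le_or_gt s 0 with hs | hs
  · simp [abelKernel_of_nonpos hT.le hs]
  gcongr
  calc _ ≤ ∫⁻ u, ‖truncPow (β - 1) (u - s)‖ₑ * ∫⁻ y, ‖heatKernel u (x - y)‖ₑ * ‖v y‖ₑ := by
        gcongr with u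
        exact enorm_heatFlow_le u v x
    _ ≤ _ := by
        rw [lintegral_truncPow_mul_lintegral_heatKernel_mul hγ hβ hs x hv.enorm]
        gcongr
        exact lintegral_heatKernel_mul_le_of_le hs hB x

lemma integral_abelKernel_smul_heatFlow_rieszPotential [Nontrivial E] [CompleteSpace F]
    (hγ : 0 < γ) (hβ : 2 * β = finrank ℝ E - γ) (hβ0 : 0 < β) (hβ1 : β < 1) (hT : 0 < T)
    (hv : StronglyMeasurable v) (hB : ∀ z, ∫⁻ y, ‖‖z - y‖ ^ (-γ)‖ₑ * ‖v y‖ₑ ≤ B)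
    (hB_top : B ≠ ∞) (x : E) :
    subordinationConst E γ • ∫ s, abelKernel β T s • heatFlow s (rieszPotential γ v) x =
      (Real.Gamma (1 - β) * Real.Gamma β) • ∫ u in Ioc 0 T, heatFlow u v x := by
  have hpos (s : ℝ) : abelKernel β T s • subordinationConst E γ •
      heatFlow s (rieszPotential γ v) x =
      abelKernel β T s • ∫ u, truncPow (β - 1) (u - s) • heatFlow u v x := by
    rcases le_or_gt s 0 with hs | hs
    · simp [abelKernel_of_nonpos hT.le hs]
    · rw [heatFlow_rieszPotential hγ hβ hs hv hB hB_top]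
  rw [← integral_smul]
  simp_rw [smul_comm (subordinationConst E γ), hpos]
  rw [integral_smul_integral_smul (by fun_prop) (by fun_prop) (stronglyMeasurable_heatFlow hv x)
    (lintegral_abelKernel_mul_lintegral_truncPow_mul_heatFlow_ne_top hγ hβ hβ0.le hβ1 hT hv hB
      hB_top x), ← integral_smul, ← integral_indicator measurableSet_Ioc]
  simp_rw [integral_abelKernel_mul_truncPow hβ0 hβ1 hT, indicator_smul_apply_left]

lemma enorm_integral_heatFlow_le [Nontrivial E] [CompleteSpace F]
    (hγ : 0 < γ) (hβ : 2 * β = finrank ℝ E - γ) (hβ0 : 0 < β) (hβ1 : β < 1) (hT : 0 < T)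
    (hv : StronglyMeasurable v) (hB : ∀ z, ∫⁻ y, ‖‖z - y‖ ^ (-γ)‖ₑ * ‖v y‖ₑ ≤ B)
    (hB_top : B ≠ ∞) (x : E) :
    ‖∫ u in Ioc 0 T, heatFlow u v x‖ₑ ≤
      ENNReal.ofReal (subordinationConst E γ / (Real.Gamma (1 - β) * Real.Gamma β) *
        (2 * (T ^ (1 - β) / (1 - β)))) * hlMaximal volume (‖rieszPotential γ v ·‖ₑ) x := by
  have hΓ : 0 < Real.Gamma (1 - β) * Real.Gamma β :=
    mul_pos (Real.Gamma_pos_of_pos (sub_pos.2 hβ1)) (Real.Gamma_pos_of_pos hβ0)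
  have hc := subordinationConst_pos (E := E) hγ
  have hinv : ∫ u in Ioc 0 T, heatFlow u v x =
      (subordinationConst E γ / (Real.Gamma (1 - β) * Real.Gamma β)) •
        ∫ s, abelKernel β T s • heatFlow s (rieszPotential γ v) x := by
    rw [div_eq_inv_mul, mul_smul, integral_abelKernel_smul_heatFlow_rieszPotential hγ hβ hβ0 hβ1 hT
      hv hB hB_top, inv_smul_smul₀ hΓ.ne']
  have hflow (s : ℝ) : ‖abelKernel β T s • heatFlow s (rieszPotential γ v) x‖ₑ ≤
      ‖abelKernel β T s‖ₑ * hlMaximal volume (‖rieszPotential γ v ·‖ₑ) x := by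
    rcases le_or_gt s 0 with hs | hs
    · simp [abelKernel_of_nonpos hT.le hs]
    rw [enorm_smul]
    gcongr
    exact (enorm_heatFlow_le s _ x).trans <| lintegral_heatKernel_mul_le_hlMaximal hs x
      (stronglyMeasurable_rieszPotential hv).enorm
  rw [hinv, enorm_smul, ENNReal.ofReal_mul (by positivity), Real.enorm_of_nonneg (by positivity),
    mul_assoc]
  gcongr
  calc _ ≤ ∫⁻ s, ‖abelKernel β T s‖ₑ * hlMaximal volume (‖rieszPotential γ v ·‖ₑ) x :=
        (enorm_integral_le_lintegral_enorm _).trans (lintegral_mono hflow)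
    _ ≤ _ := by
        rw [lintegral_mul_const _ (by fun_prop)]
        gcongr
        exact lintegral_enorm_abelKernel_le hβ0.le hβ1 hT

end RieszPotential

section HighFrequency

open Module

variable {E : Type*} [NormedAddCommGroup E] [InnerProductSpace ℝ E]
  {F : Type*} [NormedAddCommGroup F] [NormedSpace ℝ F] {v : E → F} {s θ T : ℝ}

lemma enorm_sub_sub_le_lintegral (hv : ContDiff ℝ 1 v) (x z : E) :
    ‖v x - v (x - z)‖ₑ ≤ ∫⁻ θ in Icc (0 : ℝ) 1, ‖z‖ₑ * ‖fderiv ℝ v (x - θ • z)‖ₑ := by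
  have hderiv (θ : ℝ) : HasDerivAt (fun θ : ℝ => v (x - θ • z))
      (fderiv ℝ v (x - θ • z) (-z)) θ := by
    have hline : HasDerivAt (fun θ : ℝ => x - θ • z) (-z) θ := by
      simpa using ((hasDerivAt_id θ).smul_const z).const_sub x
    exact (hv.differentiable one_ne_zero _).hasFDerivAt.comp_hasDerivAt θ hline
  have hsegment := enorm_sub_le_lintegral_deriv_of_contDiffOn_Icc
    (f := fun θ : ℝ => v (x - θ • z)) (by fun_prop) zero_le_one
  simp only [one_smul, zero_smul, sub_zero, (hderiv _).deriv] at hsegment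
  rw [← enorm_neg, neg_sub]
  refine hsegment.trans (lintegral_mono fun θ => ?_)
  rw [mul_comm, ← enorm_neg z]
  exact ContinuousLinearMap.le_opENorm _ _

lemma heatKernel_eq_mul_heatKernel_smul (hs : 0 < s) (hθ : 0 < θ) (z : E) :
    heatKernel s z = θ ^ finrank ℝ E * heatKernel (θ ^ 2 * s) (θ • z) := by
  have hpow : θ ^ finrank ℝ E = (θ ^ 2) ^ (finrank ℝ E / 2 : ℝ) := by
    rw [← Real.rpow_natCast, ← Real.rpow_natCast, ← Real.rpow_mul hθ.le]
    push_cast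
    ring_nf
  rw [heatKernel, heatKernel, mul_left_comm Real.pi,
    Real.mul_rpow (x := θ ^ 2) (by positivity) (by positivity), norm_smul, mul_pow,
    Real.norm_eq_abs, sq_abs, mul_div_mul_left _ _ (by positivity), hpow, ← mul_assoc,
    ← mul_assoc, ← Real.rpow_add (by positivity), add_neg_cancel, Real.rpow_zero, one_mul]

variable [MeasurableSpace E] [BorelSpace E] [FiniteDimensional ℝ E]

lemma lintegral_heatKernel_mul_comp_smul (hs : 0 < s) (hθ : 0 < θ) {f : E → ℝ≥0∞}
    (hf : Measurable f) :
    ∫⁻ z, ‖heatKernel s z‖ₑ * f (θ • z) = ∫⁻ z, ‖heatKernel (θ ^ 2 * s) z‖ₑ * f z := by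
  have hdil := lintegral_map (μ := volume) (g := fun z : E => θ • z)
    (f := fun z => ‖heatKernel (θ ^ 2 * s) z‖ₑ * f z) (by fun_prop) (by fun_prop)
  rw [Measure.map_addHaar_smul _ hθ.ne', lintegral_smul_measure] at hdil
  simp_rw [heatKernel_eq_mul_heatKernel_smul hs hθ, enorm_mul, mul_assoc]
  rw [lintegral_const_mul' _ _ enorm_ne_top, ← hdil, ← Real.enorm_eq_ofReal_abs, smul_eq_mul,
    ← mul_assoc, ← enorm_mul, mul_inv_cancel₀ (by positivity), enorm_one, one_mul]

lemma lintegral_heatKernel_mul_comp_sub_smul_le (hs : 0 < s) (hθ : 0 < θ) {f : E → ℝ≥0∞}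
    (hf : Measurable f) (x : E) :
    ∫⁻ z, ‖heatKernel s z‖ₑ * f (x - θ • z) ≤ hlMaximal volume f x := by
  rw [lintegral_heatKernel_mul_comp_smul hs hθ (f := fun z => f (x - z)) (by fun_prop),
    ← lintegral_sub_left_eq_self (fun z => ‖heatKernel (θ ^ 2 * s) z‖ₑ * f (x - z)) x]
  simpa only [sub_sub_self] using
    lintegral_heatKernel_mul_le_hlMaximal (by positivity) x hf

lemma lintegral_heatKernel_mul_enorm_sub_le (hs : 0 < s) (hv : ContDiff ℝ 1 v) (x : E) :
    ∫⁻ z, ‖heatKernel s z‖ₑ * ‖v x - v (x - z)‖ₑ ≤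
      ENNReal.ofReal (2 ^ (finrank ℝ E / 2 : ℝ) * √s) *
        hlMaximal volume (‖fderiv ℝ v ·‖ₑ) x := by
  set c := ENNReal.ofReal (2 ^ (finrank ℝ E / 2 : ℝ) * √s)
  have hf : Measurable (‖fderiv ℝ v ·‖ₑ) := (hv.continuous_fderiv one_ne_zero).enorm.measurable
  have hker (z : E) : ‖heatKernel s z‖ₑ * ‖z‖ₑ ≤ c * ‖heatKernel (2 * s) z‖ₑ := by
    rw [enorm_heatKernel hs, enorm_heatKernel (by positivity), ← ofReal_norm,
      ← ENNReal.ofReal_mul (heatKernel_pos hs z).le, ← ENNReal.ofReal_mul (by positivity)]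
    exact ENNReal.ofReal_le_ofReal (heatKernel_mul_norm_le hs z)
  calc ∫⁻ z, ‖heatKernel s z‖ₑ * ‖v x - v (x - z)‖ₑ
      ≤ ∫⁻ z, ∫⁻ θ in Ioc (0 : ℝ) 1,
          c * (‖heatKernel (2 * s) z‖ₑ * ‖fderiv ℝ v (x - θ • z)‖ₑ) := by
        refine lintegral_mono fun z => ?_
        grw [enorm_sub_sub_le_lintegral hv x z, ← lintegral_const_mul' _ _ enorm_ne_top,
          restrict_Ioc_eq_restrict_Icc]
        refine lintegral_mono fun θ => ?_
        rw [← mul_assoc, ← mul_assoc]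
        exact mul_le_mul' (hker z) le_rfl
    _ = ∫⁻ θ in Ioc (0 : ℝ) 1, c *
          ∫⁻ z, ‖heatKernel (2 * s) z‖ₑ * ‖fderiv ℝ v (x - θ • z)‖ₑ := by
        rw [lintegral_lintegral_swap (by fun_prop)]
        simp_rw [lintegral_const_mul' c _ ofReal_ne_top]
    _ ≤ ∫⁻ _ in Ioc (0 : ℝ) 1, c * hlMaximal volume (‖fderiv ℝ v ·‖ₑ) x := by
        refine setLIntegral_mono' measurableSet_Ioc fun θ hθ => ?_
        gcongr
        exact lintegral_heatKernel_mul_comp_sub_smul_le (by positivity) hθ.1 hf x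
    _ = c * hlMaximal volume (‖fderiv ℝ v ·‖ₑ) x := by simp

lemma enorm_sub_heatFlow_le [CompleteSpace F] (hs : 0 < s) (hv : ContDiff ℝ 1 v) {b : ℝ}
    (hb : ∀ x, ‖v x‖ ≤ b) (x : E) :
    ‖v x - heatFlow s v x‖ₑ ≤ ENNReal.ofReal (2 ^ (finrank ℝ E / 2 : ℝ) * √s) *
        hlMaximal volume (‖fderiv ℝ v ·‖ₑ) x := by
  have hG : Integrable (heatKernel s : E → ℝ) :=
    .of_integral_ne_zero (by simp [integral_heatKernel hs])
  have hGv : Integrable fun z => heatKernel s z • v (x - z) :=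
    hG.smul_bdd b (hv.continuous.comp (by fun_prop)).aestronglyMeasurable
      (.of_forall fun z => hb _)
  have hflow : heatFlow s v x = ∫ z, heatKernel s z • v (x - z) := by
    rw [heatFlow, ← integral_sub_left_eq_self (fun y => heatKernel s (x - y) • v y) volume x]
    simp only [sub_sub_self]
  have hdiff : v x - heatFlow s v x = ∫ z, heatKernel s z • (v x - v (x - z)) := by
    simp_rw [smul_sub]
    rw [integral_sub (hG.smul_const _) hGv, integral_smul_const, integral_heatKernel hs,
      one_smul, hflow]
  rw [hdiff]
  refine (enorm_integral_le_lintegral_enorm _).trans ?_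
  simp_rw [enorm_smul]
  exact lintegral_heatKernel_mul_enorm_sub_le hs hv x

end HighFrequency

lemma le_two_mul_rpow_mul_rpow {V K A B α β a b : ℝ} (hK : 0 ≤ K) (hA : 0 ≤ A) (hB : 0 ≤ B)
    (hα : 0 < α) (hβ : 0 < β) (ha : a = β / (α + β)) (hb : b = α / (α + β))
    (h : ∀ t, 0 < t → V ≤ K * (t ^ α * A + t ^ (-β) * B)) : V ≤ 2 * K * (A ^ a * B ^ b) := by
  have hab : a + b = 1 := by rw [ha, hb, ← add_div, add_comm β, div_self (by positivity)]
  have ha0 : 0 < a := by rw [ha]; positivity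
  have hb0 : 0 < b := by rw [hb]; positivity
  have hα' : (α + β)⁻¹ * α = b := by rw [hb, div_eq_inv_mul]
  have hβ' : (α + β)⁻¹ * -β = -a := by rw [ha, div_eq_inv_mul, mul_neg]
  have hpos (A B : ℝ) (hA : 0 < A) (hB : 0 < B)
      (h : ∀ t, 0 < t → V ≤ K * (t ^ α * A + t ^ (-β) * B)) : V ≤ 2 * K * (A ^ a * B ^ b) := by
    have hfst : ((B / A) ^ (α + β)⁻¹) ^ α * A = A ^ a * B ^ b := by
      rw [← Real.rpow_mul (by positivity), hα', Real.div_rpow hB.le hA.le, eq_sub_of_add_eq hab,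
        Real.rpow_sub hA, Real.rpow_one]
      ring
    have hsnd : ((B / A) ^ (α + β)⁻¹) ^ (-β) * B = A ^ a * B ^ b := by
      rw [← Real.rpow_mul (by positivity), hβ', Real.rpow_neg (by positivity),
        Real.div_rpow hB.le hA.le, eq_sub_of_add_eq' hab, Real.rpow_sub hB, Real.rpow_one]
      field_simp
    calc V ≤ _ := h ((B / A) ^ (α + β)⁻¹) (by positivity)
      _ = 2 * K * (A ^ a * B ^ b) := by rw [hfst, hsnd]; ring
  have hlim : Tendsto (fun ε => 2 * K * ((A + ε) ^ a * (B + ε) ^ b)) (nhdsWithin 0 (Ioi 0))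
      (nhds (2 * K * ((A + 0) ^ a * (B + 0) ^ b))) := by
    refine (Continuous.tendsto ?_ 0).mono_left nhdsWithin_le_nhds
    exact continuous_const.mul <| (Continuous.rpow_const (by fun_prop) fun _ => .inr ha0.le).mul
      (Continuous.rpow_const (by fun_prop) fun _ => .inr hb0.le)
  simp only [add_zero] at hlim
  refine ge_of_tendsto hlim ?_
  filter_upwards [self_mem_nhdsWithin] with ε (hε : 0 < ε)
  refine hpos _ _ (by positivity) (by positivity) fun t ht => (h t ht).trans ?_
  gcongr <;> linarith

lemma ennreal_le_two_mul_rpow_mul_rpow {V A B : ℝ≥0∞} {K α β a b : ℝ} (hK : 0 ≤ K)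
    (hA : A ≠ ∞) (hB : B ≠ ∞) (hα : 0 < α) (hβ : 0 < β) (ha : a = β / (α + β))
    (hb : b = α / (α + β))
    (h : ∀ t : ℝ, 0 < t →
      V ≤ ENNReal.ofReal K * (ENNReal.ofReal (t ^ α) * A + ENNReal.ofReal (t ^ (-β)) * B)) :
    V ≤ ENNReal.ofReal (2 * K) * (A ^ a * B ^ b) := by
  have ha0 : 0 < a := by rw [ha]; positivity
  have hb0 : 0 < b := by rw [hb]; positivity
  have hrhs : ENNReal.ofReal (2 * K) * (A ^ a * B ^ b) =
      ENNReal.ofReal (2 * K * (A.toReal ^ a * B.toReal ^ b)) := by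
    rw [ENNReal.ofReal_mul (p := 2 * K) (by positivity),
      ENNReal.ofReal_mul (p := _ ^ a) (by positivity),
      ← ENNReal.ofReal_rpow_of_nonneg toReal_nonneg ha0.le,
      ← ENNReal.ofReal_rpow_of_nonneg toReal_nonneg hb0.le, ofReal_toReal hA, ofReal_toReal hB]
  have hV : V ≠ ∞ := ne_top_of_le_ne_top (by finiteness) (h 1 one_pos)
  rw [hrhs, ← ofReal_toReal hV]
  refine ENNReal.ofReal_le_ofReal
    (le_two_mul_rpow_mul_rpow hK toReal_nonneg toReal_nonneg hα hβ ha hb fun t ht => ?_)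
  refine (ENNReal.toReal_mono (by finiteness) (h t ht)).trans_eq ?_
  rw [toReal_mul, toReal_add (by finiteness) (by finiteness), toReal_mul, toReal_mul,
    toReal_ofReal hK, toReal_ofReal (by positivity), toReal_ofReal (by positivity)]

section Pointwise

open Module

variable {E : Type*} [NormedAddCommGroup E] [InnerProductSpace ℝ E] [FiniteDimensional ℝ E]
  [MeasurableSpace E] [BorelSpace E] {F : Type*} [NormedAddCommGroup F] {v : E → F} {β γ T : ℝ}

lemma setLIntegral_ball_norm_rpow_lt_top [Nontrivial E] (hγ : γ < finrank ℝ E) :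
    ∫⁻ y in ball (0 : E) 1, ‖‖y‖ ^ (-γ)‖ₑ < ∞ := by
  have hint : IntegrableOn (fun y : E => ‖y‖ ^ (-γ)) (ball 0 1) := by
    rw [integrableOn_fun_norm_addHaar volume (f := fun t : ℝ => t ^ (-γ)),
      integrableOn_congr_fun (g := fun t : ℝ => t ^ (finrank ℝ E - 1 - γ)) _ measurableSet_Ioo,
      intervalIntegral.integrableOn_Ioo_rpow_iff one_pos]
    · linarith
    · intro t ht
      simp only [smul_eq_mul]
      rw [sub_eq_add_neg _ γ, Real.rpow_add ht.1, ← Real.rpow_natCast, Nat.cast_pred finrank_pos]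
  exact hint.hasFiniteIntegral

lemma lintegral_norm_sub_rpow_mul_le (hγ : 0 ≤ γ) {f : E → ℝ≥0∞} (hf : Measurable f)
    {b : ℝ≥0∞} (hb : ∀ y, f y ≤ b) (z : E) :
    ∫⁻ y, ‖‖z - y‖ ^ (-γ)‖ₑ * f y ≤
      (∫⁻ y in ball (0 : E) 1, ‖‖y‖ ^ (-γ)‖ₑ) * b + ∫⁻ y, f y := by
  set k : E → ℝ≥0∞ := (ball 0 1).indicator fun y => ‖‖y‖ ^ (-γ)‖ₑ
  have hle (y : E) : ‖‖z - y‖ ^ (-γ)‖ₑ * f y ≤ k (z - y) * b + f y := by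
    by_cases hy : z - y ∈ ball (0 : E) 1
    · simp only [k, indicator_of_mem hy]
      exact le_add_right (by gcongr; exact hb y)
    · rw [mem_ball_zero_iff, not_lt] at hy
      refine le_add_left (mul_le_of_le_one_left zero_le ?_)
      rw [Real.enorm_of_nonneg (by positivity), ofReal_le_one]
      exact Real.rpow_le_one_of_one_le_of_nonpos hy (neg_nonpos.2 hγ)
  calc _ ≤ ∫⁻ y, (k (z - y) * b + f y) := lintegral_mono hle
    _ = _ := by
      have hk : Measurable k := Measurable.indicator (by fun_prop) measurableSet_ball
      rw [lintegral_add_right _ hf, lintegral_mul_const _ (by fun_prop),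
        lintegral_sub_left_eq_self k, lintegral_indicator measurableSet_ball]

lemma exists_lintegral_norm_sub_rpow_mul_enorm_le [Nontrivial E] (hγ : 0 ≤ γ)
    (hγ_lt : γ < finrank ℝ E) (hv : Continuous v) (hv_int : Integrable v) {b : ℝ}
    (hb : ∀ x, ‖v x‖ ≤ b) :
    ∃ B ≠ ∞, ∀ z, ∫⁻ y, ‖‖z - y‖ ^ (-γ)‖ₑ * ‖v y‖ₑ ≤ B :=
  ⟨_, add_ne_top.2 ⟨mul_ne_top (setLIntegral_ball_norm_rpow_lt_top hγ_lt).ne ofReal_ne_top,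
      hv_int.hasFiniteIntegral.ne⟩,
    lintegral_norm_sub_rpow_mul_le hγ hv.enorm.measurable fun y => by
      rw [← ofReal_norm]
      exact ENNReal.ofReal_le_ofReal (hb y)⟩

variable [NormedSpace ℝ F] [CompleteSpace F]

lemma enorm_le_add_enorm_integral_heatFlow (hT : 0 < T) (hv : ContDiff ℝ 1 v) {b : ℝ}
    (hb : ∀ x, ‖v x‖ ≤ b) (x : E) :
    ‖v x‖ₑ ≤ ENNReal.ofReal (2 ^ (finrank ℝ E / 2 : ℝ) * √T) *
        hlMaximal volume (‖fderiv ℝ v ·‖ₑ) x +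
      ENNReal.ofReal T⁻¹ * ‖∫ s in Ioc 0 T, heatFlow s v x‖ₑ := by
  set M := hlMaximal volume (‖fderiv ℝ v ·‖ₑ) x
  have hflow : IntegrableOn (fun s => heatFlow s v x) (Ioc 0 T) := by
    refine Measure.integrableOn_of_bounded (M := b) (by simp)
      (stronglyMeasurable_heatFlow hv.continuous.stronglyMeasurable x).aestronglyMeasurable ?_
    filter_upwards [ae_restrict_mem measurableSet_Ioc] with s hs
    rw [← ENNReal.ofReal_le_ofReal_iff ((norm_nonneg _).trans (hb x)), ofReal_norm]
    refine (enorm_heatFlow_le s v x).trans (lintegral_heatKernel_mul_le_of_le hs.1 (fun z => ?_) x)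
    rw [← ofReal_norm]
    exact ENNReal.ofReal_le_ofReal (hb z)
  have hsplit : v x = T⁻¹ • ((∫ s in Ioc 0 T, (v x - heatFlow s v x)) +
      ∫ s in Ioc 0 T, heatFlow s v x) := by
    rw [integral_sub (integrable_const _) hflow, sub_add_cancel]
    simp [hT.le, hT.ne']
  have hhigh : ‖∫ s in Ioc 0 T, (v x - heatFlow s v x)‖ₑ ≤
      ENNReal.ofReal T * (ENNReal.ofReal (2 ^ (finrank ℝ E / 2 : ℝ) * √T) * M) :=
    calc _ ≤ ∫⁻ s in Ioc 0 T, ‖v x - heatFlow s v x‖ₑ := enorm_integral_le_lintegral_enorm _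
      _ ≤ ∫⁻ _ in Ioc 0 T, ENNReal.ofReal (2 ^ (finrank ℝ E / 2 : ℝ) * √T) * M := by
        refine setLIntegral_mono' measurableSet_Ioc fun s hs => ?_
        grw [enorm_sub_heatFlow_le hs.1 hv hb x, hs.2]
      _ = _ := by simp [mul_comm]
  calc ‖v x‖ₑ = ENNReal.ofReal T⁻¹ * ‖(∫ s in Ioc 0 T, (v x - heatFlow s v x)) +
        ∫ s in Ioc 0 T, heatFlow s v x‖ₑ := by
        conv_lhs => rw [hsplit]
        rw [enorm_smul, Real.enorm_of_nonneg (by positivity)]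
    _ ≤ ENNReal.ofReal T⁻¹ * (ENNReal.ofReal T * (ENNReal.ofReal
          (2 ^ (finrank ℝ E / 2 : ℝ) * √T) * M) + ‖∫ s in Ioc 0 T, heatFlow s v x‖ₑ) := by
        grw [enorm_add_le, hhigh]
    _ = _ := by
        rw [mul_add, ← mul_assoc, ← ENNReal.ofReal_mul (by positivity), inv_mul_cancel₀ hT.ne',
          ENNReal.ofReal_one, one_mul]

lemma enorm_le_mul_rpow_mul_add_rpow_mul [Nontrivial E] (hγ : 0 < γ)
    (hβ : 2 * β = finrank ℝ E - γ) (hβ0 : 0 < β) (hβ1 : β < 1) (hT : 0 < T)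
    (hv : ContDiff ℝ 1 v) {b : ℝ} (hb : ∀ x, ‖v x‖ ≤ b) {B : ℝ≥0∞}
    (hB : ∀ z, ∫⁻ y, ‖‖z - y‖ ^ (-γ)‖ₑ * ‖v y‖ₑ ≤ B) (hB_top : B ≠ ∞) (x : E) :
    ‖v x‖ₑ ≤ ENNReal.ofReal (2 ^ (finrank ℝ E / 2 : ℝ) +
        subordinationConst E γ / (Real.Gamma (1 - β) * Real.Gamma β) * (2 / (1 - β))) *
      (ENNReal.ofReal (T ^ (2⁻¹ : ℝ)) * hlMaximal volume (‖fderiv ℝ v ·‖ₑ) x +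
        ENNReal.ofReal (T ^ (-β)) * hlMaximal volume (‖rieszPotential γ v ·‖ₑ) x) := by
  set c := subordinationConst E γ / (Real.Gamma (1 - β) * Real.Gamma β)
  have hβ1' : 0 < 1 - β := sub_pos.2 hβ1
  have hc : 0 < c := div_pos (subordinationConst_pos hγ)
    (mul_pos (Real.Gamma_pos_of_pos hβ1') (Real.Gamma_pos_of_pos hβ0))
  have hlow : T⁻¹ * (c * (2 * (T ^ (1 - β) / (1 - β)))) = c * (2 / (1 - β)) * T ^ (-β) := by
    rw [sub_eq_add_neg, Real.rpow_add hT, Real.rpow_one]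
    field_simp
  grw [enorm_le_add_enorm_integral_heatFlow hT hv hb x,
    enorm_integral_heatFlow_le hγ hβ hβ0 hβ1 hT hv.continuous.stronglyMeasurable hB hB_top x]
  rw [← mul_assoc (ENNReal.ofReal T⁻¹), ← ENNReal.ofReal_mul (by positivity), hlow,
    Real.sqrt_eq_rpow, one_div, mul_add, ENNReal.ofReal_mul (by positivity),
    ENNReal.ofReal_mul (q := T ^ (-β)) (by positivity), mul_assoc, mul_assoc]
  gcongr
  · exact le_add_of_nonneg_right (by positivity)
  · exact le_add_of_nonneg_left (by positivity)

theorem exists_enorm_le_hlMaximal_fderiv_mul_hlMaximal_rieszPotential {a b : ℝ} (hγ : 0 < γ)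
    (hγ_gt : finrank ℝ E - 2 < γ) (hγ_lt : γ < finrank ℝ E) (hab : a + b = 1)
    (ha : a = b * (finrank ℝ E - γ)) :
    ∃ C : ℝ, 0 < C ∧ ∀ v : E → F, ContDiff ℝ 1 v → Integrable v → (∃ c, ∀ x, ‖v x‖ ≤ c) →
      (∃ c, ∀ x, ‖fderiv ℝ v x‖ ≤ c) → ∀ x, ‖v x‖ₑ ≤ ENNReal.ofReal C *
        (hlMaximal volume (‖fderiv ℝ v ·‖ₑ) x ^ a *
          hlMaximal volume (‖rieszPotential γ v ·‖ₑ) x ^ b) := by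
  have : Nontrivial E := finrank_pos_iff.1 (by exact_mod_cast hγ.trans hγ_lt)
  obtain ⟨β, hβ⟩ : ∃ β, 2 * β = finrank ℝ E - γ := ⟨(finrank ℝ E - γ) / 2, by ring⟩
  have hβ0 : 0 < β := by linarith
  have hβ1 : 0 < 1 - β := by linarith
  have hβa : a = β / (2⁻¹ + β) := by
    rw [_root_.eq_div_iff (by positivity)]
    linear_combination β * hab + ha / 2 - b * hβ / 2
  have hβb : b = 2⁻¹ / (2⁻¹ + β) := by
    rw [_root_.eq_div_iff (by positivity)]
    linear_combination hab / 2 - ha / 2 + b * hβ / 2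
  set K : ℝ := 2 ^ (finrank ℝ E / 2 : ℝ) +
    subordinationConst E γ / (Real.Gamma (1 - β) * Real.Gamma β) * (2 / (1 - β))
  have hK : 0 < K := by
    have := subordinationConst_pos (E := E) hγ
    have := Real.Gamma_pos_of_pos hβ0
    have := Real.Gamma_pos_of_pos hβ1
    positivity
  refine ⟨2 * K, by positivity, fun v hv hv_int ⟨c, hc⟩ ⟨c', hc'⟩ x => ?_⟩
  obtain ⟨B, hB_top, hB⟩ :=
    exists_lintegral_norm_sub_rpow_mul_enorm_le hγ.le hγ_lt hv.continuous hv_int hc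
  refine ennreal_le_two_mul_rpow_mul_rpow hK.le ?_ ?_ (by norm_num) hβ0 hβa hβb
    fun T hT => enorm_le_mul_rpow_mul_add_rpow_mul hγ hβ hβ0 (by linarith) hT hv hc hB hB_top x
  · refine ne_top_of_le_ne_top ofReal_ne_top
      (hlMaximal_le_of_le (B := ENNReal.ofReal c') (fun y => ?_) x)
    rw [← ofReal_norm]
    exact ENNReal.ofReal_le_ofReal (hc' y)
  · exact ne_top_of_le_ne_top hB_top
      (hlMaximal_le_of_le (fun z => (enorm_rieszPotential_le γ v z).trans (hB z)) x)

end Pointwise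

section LpNorms

variable {X : Type*} [MeasurableSpace X] {μ : Measure X}

lemma eLpNorm_ofReal_eq_lintegral_rpow {f : X → ℝ≥0∞} {p : ℝ} (hp : 0 < p) :
    eLpNorm f (ENNReal.ofReal p) μ = (∫⁻ x, f x ^ p ∂μ) ^ p⁻¹ := by
  rw [eLpNorm_eq_lintegral_rpow_enorm_toReal (ENNReal.ofReal_pos.2 hp).ne' ofReal_ne_top,
    toReal_ofReal hp.le, one_div]
  simp only [enorm_eq_self]

lemma eLpNorm_rpow_mul_rpow_le {f g : X → ℝ≥0∞} (hf : AEMeasurable f μ) (hg : AEMeasurable g μ)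
    {p q r a b : ℝ} (hp : 0 < p) (hq : 0 < q) (hr : 0 < r) (ha : 0 ≤ a) (hb : 0 ≤ b)
    (hpqr : r⁻¹ = a / p + b / q) :
    eLpNorm (fun x => f x ^ a * g x ^ b) (ENNReal.ofReal r) μ ≤
      eLpNorm f (ENNReal.ofReal p) μ ^ a * eLpNorm g (ENNReal.ofReal q) μ ^ b := by
  rw [eLpNorm_ofReal_eq_lintegral_rpow hr, eLpNorm_ofReal_eq_lintegral_rpow hp,
    eLpNorm_ofReal_eq_lintegral_rpow hq]
  have hsum : r * a / p + r * b / q = 1 := by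
    rw [mul_div_assoc, mul_div_assoc, ← mul_add, ← hpqr, mul_inv_cancel₀ hr.ne']
  have hpow (x : X) :
      (f x ^ a * g x ^ b) ^ r = (f x ^ p) ^ (r * a / p) * (g x ^ q) ^ (r * b / q) := by
    rw [ENNReal.mul_rpow_of_nonneg _ _ hr.le, ← ENNReal.rpow_mul, ← ENNReal.rpow_mul,
      ← ENNReal.rpow_mul, ← ENNReal.rpow_mul, mul_div_cancel₀ _ hp.ne', mul_div_cancel₀ _ hq.ne',
      mul_comm r, mul_comm r]
  calc (∫⁻ x, (f x ^ a * g x ^ b) ^ r ∂μ) ^ r⁻¹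
      ≤ ((∫⁻ x, f x ^ p ∂μ) ^ (r * a / p) * (∫⁻ x, g x ^ q ∂μ) ^ (r * b / q)) ^ r⁻¹ := by
        simp_rw [hpow]
        gcongr
        exact ENNReal.lintegral_mul_norm_pow_le (hf.pow_const p) (hg.pow_const q) (by positivity)
          (by positivity) hsum
    _ = ((∫⁻ x, f x ^ p ∂μ) ^ p⁻¹) ^ a * ((∫⁻ x, g x ^ q ∂μ) ^ q⁻¹) ^ b := by
        rw [ENNReal.mul_rpow_of_nonneg _ _ (by positivity), ← ENNReal.rpow_mul,
          ← ENNReal.rpow_mul, ← ENNReal.rpow_mul, ← ENNReal.rpow_mul]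
        congr 2 <;> field_simp

lemma exists_eLpNorm_hlMaximal_le {E : Type*} [NormedAddCommGroup E] [NormedSpace ℝ E]
    [FiniteDimensional ℝ E] [MeasurableSpace E] [BorelSpace E] (μ : Measure E)
    [μ.IsAddHaarMeasure] {p : ℝ} (hp : 1 < p) :
    ∃ C : ℝ, 0 < C ∧ ∀ f : E → ℝ≥0∞, Measurable f →
      eLpNorm (hlMaximal μ f) (ENNReal.ofReal p) μ ≤
        ENNReal.ofReal C * eLpNorm f (ENNReal.ofReal p) μ := by
  have hp0 : 0 < p := one_pos.trans hp
  have hp1 : 0 < p - 1 := sub_pos.2 hp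
  set C : ℝ := 2 ^ p * (p / (p - 1)) * 5 ^ Module.finrank ℝ E
  have hC : 0 < C := mul_pos (mul_pos (by positivity) (div_pos hp0 hp1)) (by positivity)
  refine ⟨C ^ p⁻¹, by positivity, fun f hf => ?_⟩
  rw [eLpNorm_ofReal_eq_lintegral_rpow hp0, eLpNorm_ofReal_eq_lintegral_rpow hp0,
    ← ENNReal.ofReal_rpow_of_pos hC, ← ENNReal.mul_rpow_of_nonneg _ _ (by positivity)]
  gcongr
  refine (lintegral_hlMaximal_rpow_le (addHaar_closedBall_five_mul_le μ) hp hf).trans_eq ?_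
  rw [ENNReal.ofReal_mul (p := _ * _) (by positivity), ENNReal.ofReal_pow (by positivity)]
  simp

end LpNorms

end RieszInterp

open Module RieszInterp in
theorem L103_interpolation_riesz_potential_general {E F : Type*} [NormedAddCommGroup E]
    [InnerProductSpace ℝ E] [FiniteDimensional ℝ E] [MeasurableSpace E] [BorelSpace E]
    [NormedAddCommGroup F] [NormedSpace ℝ F] [CompleteSpace F] {γ a b p q r : ℝ} (hγ : 0 < γ)
    (hγ_gt : finrank ℝ E - 2 < γ) (hγ_lt : γ < finrank ℝ E) (hp : 1 < p) (hq : 1 < q)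
    (hab : a + b = 1) (ha : a = b * (finrank ℝ E - γ)) (hr : r⁻¹ = a / p + b / q) :
    ∃ C : ℝ, 0 < C ∧ ∀ v : E → F, ContDiff ℝ 1 v → Integrable v → (∃ c, ∀ x, ‖v x‖ ≤ c) →
      (∃ c, ∀ x, ‖fderiv ℝ v x‖ ≤ c) →
        eLpNorm v (ENNReal.ofReal r) volume ≤ ENNReal.ofReal C *
          eLpNorm (fun x => ‖fderiv ℝ v x‖) (ENNReal.ofReal p) volume ^ a *
          eLpNorm (rieszPotential γ v) (ENNReal.ofReal q) volume ^ b := by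
  obtain ⟨K, hK, hpointwise⟩ :=
    exists_enorm_le_hlMaximal_fderiv_mul_hlMaximal_rieszPotential (F := F) hγ hγ_gt hγ_lt hab ha
  obtain ⟨c₁, hc₁, hmax₁⟩ := exists_eLpNorm_hlMaximal_le (volume : Measure E) hp
  obtain ⟨c₂, hc₂, hmax₂⟩ := exists_eLpNorm_hlMaximal_le (volume : Measure E) hq
  have hb0 : 0 < b := by nlinarith
  have ha0 : 0 < a := by rw [ha]; nlinarith
  have hr0 : 0 < r := inv_pos.1 (by rw [hr]; positivity)
  refine ⟨K * (c₁ ^ a * c₂ ^ b), by positivity, fun v hv hv_int hv_bdd hv'_bdd => ?_⟩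
  set w := rieszPotential γ v
  set M₁ := hlMaximal volume (‖fderiv ℝ v ·‖ₑ)
  set M₂ := hlMaximal volume (‖w ·‖ₑ)
  calc eLpNorm v (ENNReal.ofReal r) volume
      ≤ ENNReal.ofReal K * eLpNorm (fun x => M₁ x ^ a * M₂ x ^ b) (ENNReal.ofReal r) volume :=
        eLpNorm_le_mul_eLpNorm_of_ae_le_mul'
          (.of_forall fun x => hpointwise v hv hv_int hv_bdd hv'_bdd x) _
    _ ≤ ENNReal.ofReal K * (eLpNorm M₁ (ENNReal.ofReal p) volume ^ a *
          eLpNorm M₂ (ENNReal.ofReal q) volume ^ b) := by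
        gcongr
        exact eLpNorm_rpow_mul_rpow_le measurable_hlMaximal.aemeasurable
          measurable_hlMaximal.aemeasurable (by linarith) (by linarith) hr0 ha0.le hb0.le hr
    _ ≤ ENNReal.ofReal K *
          ((ENNReal.ofReal c₁ * eLpNorm (‖fderiv ℝ v ·‖ₑ) (ENNReal.ofReal p) volume) ^ a *
            (ENNReal.ofReal c₂ * eLpNorm (‖w ·‖ₑ) (ENNReal.ofReal q) volume) ^ b) := by
        gcongr
        · exact hmax₁ _ (hv.continuous_fderiv one_ne_zero).enorm.measurable
        · exact hmax₂ _ (stronglyMeasurable_rieszPotential hv.continuous.stronglyMeasurable).enorm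
    _ = _ := by
        rw [eLpNorm_enorm, eLpNorm_enorm, eLpNorm_norm, ENNReal.mul_rpow_of_nonneg _ _ ha0.le,
          ENNReal.mul_rpow_of_nonneg _ _ hb0.le, ENNReal.ofReal_mul hK.le,
          ENNReal.ofReal_mul (by positivity), ENNReal.ofReal_rpow_of_pos hc₁,
          ENNReal.ofReal_rpow_of_pos hc₂]
        ring

/-- Interpolation estimate on `ℝ⁵`: for every Schwartz function `v`,
`‖v‖_{L^{10/3}} ≤ C ‖∇v‖^{1/5}_{L²} ‖ |·|^{-19/4} ∗ v ‖^{4/5}_{L⁴}`, where the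
convolution with `|·|^{-19/4}` realizes (up to a constant) `|∇|^{-1/4} v`. -/
theorem L103_interpolation_riesz_potential :
    ∃ C : ℝ, 0 < C ∧
      ∀ v : SchwartzMap (EuclideanSpace ℝ (Fin 5)) ℝ,
        eLpNorm (⇑v) (ENNReal.ofReal (10 / 3)) volume
          ≤ ENNReal.ofReal C *
              eLpNorm (fun x => ‖fderiv ℝ (⇑v) x‖) 2 volume ^ ((1 : ℝ) / 5) *
              eLpNorm (fun x => ∫ y, ‖x - y‖ ^ (-(19 / 4) : ℝ) * v y) 4 volume
                ^ ((4 : ℝ) / 5) := by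
  obtain ⟨C, hC, h⟩ := L103_interpolation_riesz_potential_general
    (E := EuclideanSpace ℝ (Fin 5)) (F := ℝ) (γ := 19 / 4) (a := 1 / 5) (b := 4 / 5) (p := 2)
    (q := 4) (r := 10 / 3) (by norm_num) (by norm_num) (by norm_num) (by norm_num) (by norm_num)
    (by norm_num) (by norm_num) (by norm_num)
  simp only [ENNReal.ofReal_ofNat] at h
  exact ⟨C, hC, fun v => h v (v.smooth 1) v.integrable ⟨_, norm_le_seminorm ℝ v⟩
    ⟨_, norm_le_seminorm ℝ (fderivCLM ℝ _ ℝ v)⟩⟩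
end
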